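/- arXiv:2001.06484 — 2 statements merged into one kernel-verified Lean document; each statement's English description precedes it below -/
import Mathlib

section
/- For every ε > 0 there exists a constant c_ε such that for every finite group G one has C(G) ≤ (1 + ε)·√|G| + c_ε. -/
/-!
Definitions supporting the formalization of
"An upper bound on the Chebotarev invariant of a finite group" (Lucchini–Tracey).
-/

open scoped BigOperators

namespace ChebotarevPaper

/-- A `k`-tuple of elements of `G` invariably generates `G` if, replacing each entry by an
arbitrary conjugate, the resulting elements always generate `G`. -/
def InvGen (G : Type*) [Group G] {k : ℕ} (f : Fin k → G) : Prop :=
  ∀ c : Fin k → G, Subgroup.closure (Set.range fun i => c i * f i * (c i)⁻¹) = ⊤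

/-- The probability that `k` independent uniformly random elements of `G` invariably
generate `G`. -/
noncomputable def probInvGen (G : Type*) [Group G] (k : ℕ) : ℝ :=
  Nat.card {f : Fin k → G // InvGen G f} / (Nat.card G : ℝ) ^ k

/-- The Chebotarev invariant `C(G)`:  `C(G) = Σ_{k ≥ 0} (1 − P_I(G,k))`, where `P_I(G,k)`
is the probability that `k` independent uniformly random elements of `G` invariably
generate `G`. -/
noncomputable def cheb (G : Type*) [Group G] : ℝ :=
  ∑' k : ℕ, (1 - probInvGen G k)

/-- The probability that `k` independent uniformly random elements of `G` generate `G`. -/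
noncomputable def probGen (G : Type*) [Group G] (k : ℕ) : ℝ :=
  Nat.card {f : Fin k → G // Subgroup.closure (Set.range f) = ⊤} / (Nat.card G : ℝ) ^ k

/-- The expected number of uniformly random elements of `G` needed to generate `G`. -/
noncomputable def expectedGen (G : Type*) [Group G] : ℝ :=
  ∑' k : ℕ, (1 - probGen G k)

/-- `d(G)`: the minimal number of generators of `G`. -/
noncomputable def minGen (G : Type*) [Group G] : ℕ :=
  sInf {n | ∃ f : Fin n → G, Subgroup.closure (Set.range f) = ⊤}

/-- `σ` has the defining property of the constant `σ = 2.118456563…` of Pomerance: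
for every finite group `X`, the expected number of uniformly random elements needed to
generate `X` is at most `d(X) + σ`. -/
def IsPomeranceConst (σ : ℝ) : Prop :=
  ∀ (X : Type) [Group X] [Finite X], expectedGen X ≤ minGen X + σ

variable (G : Type*) [Group G]

/-- `(X, Y)` is a chief factor of `G`:  both are normal in `G`, `Y < X`, and no normal
subgroup of `G` lies strictly between them (i.e. `X/Y` is a minimal normal subgroup of
`G/Y`). -/
def IsChiefFactorPair (X Y : Subgroup G) : Prop :=
  X.Normal ∧ Y.Normal ∧ Y < X ∧
    ∀ N : Subgroup G, N.Normal → Y ≤ N → N ≤ X → N = Y ∨ N = X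

/-- The chief factor `X/Y` is complemented: there is `U ≤ G` with `UX = G` and
`U ⊓ X = Y`. -/
def IsComplementedFactor (X Y : Subgroup G) : Prop :=
  ∃ U : Subgroup G, U ⊔ X = ⊤ ∧ U ⊓ X = Y

/-- The chief factor `X/Y` is a Frattini chief factor, i.e. `X/Y ≤ Frat(G/Y)`;
equivalently (and this is how we state it), `X/Y` is abelian and has no complement
in `G`. -/
def IsFrattiniFactor (X Y : Subgroup G) : Prop :=
  (∀ a b : G, a ∈ X → b ∈ X → a * b * a⁻¹ * b⁻¹ ∈ Y) ∧ ¬ IsComplementedFactor G X Y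

/-- The chief factor `X/Y` is central in `G`, i.e. `X/Y ≤ Z(G/Y)`. -/
def IsCentralFactor (X Y : Subgroup G) : Prop :=
  ∀ g x : G, x ∈ X → g * x * g⁻¹ * x⁻¹ ∈ Y

/-- The `G`-group `V` (a group with an action `a : G →* MulAut V` of `G` by automorphisms)
is `G`-isomorphic to the chief factor `X/Y` (on which `G` acts by conjugation): there is a
surjective homomorphism `X →* V` with kernel `Y` transforming conjugation by `g ∈ G` into
the action of `g` on `V`. -/
def RepresentsFactor {V : Type*} [Group V] (a : G →* MulAut V) (X Y : Subgroup G) : Prop :=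
  ∃ f : X →* V, Function.Surjective f ∧ (∀ x : X, f x = 1 ↔ (x : G) ∈ Y) ∧
    ∀ (g : G) (x y : X), (y : G) = g * (x : G) * g⁻¹ → f y = a g (f x)

/-- Two `G`-groups `(V₁, a₁)`, `(V₂, a₂)` are `G`-equivalent: there are isomorphisms
`φ : V₁ ≃* V₂` and `Φ : V₁ ⋊ G ≃* V₂ ⋊ G` making the natural diagram of the two
extensions `1 → Vᵢ → Vᵢ ⋊ G → G → 1` commute. -/
def GEquiv {V₁ V₂ : Type*} [Group V₁] [Group V₂]
    (a₁ : G →* MulAut V₁) (a₂ : G →* MulAut V₂) : Prop :=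
  ∃ (φ : V₁ ≃* V₂) (Φ : (V₁ ⋊[a₁] G) ≃* (V₂ ⋊[a₂] G)),
    (∀ v : V₁, Φ (SemidirectProduct.inl v) = SemidirectProduct.inl (φ v)) ∧
    ∀ x, (Φ x).right = x.right

/-- `G`-isomorphism of `G`-groups. -/
def GIso {V₁ V₂ : Type*} [Group V₁] [Group V₂]
    (a₁ : G →* MulAut V₁) (a₂ : G →* MulAut V₂) : Prop :=
  ∃ φ : V₁ ≃* V₂, ∀ (g : G) (v : V₁), φ (a₁ g v) = a₂ g (φ v)

/-- `N` is a minimal normal subgroup of `G`. -/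
def IsMinimalNormal (N : Subgroup G) : Prop :=
  N.Normal ∧ N ≠ ⊥ ∧ ∀ M : Subgroup G, M.Normal → M ≠ ⊥ → M ≤ N → M = N

/-- The socle of `G`: the subgroup generated by all minimal normal subgroups of `G`. -/
def socle : Subgroup G := sSup {N : Subgroup G | IsMinimalNormal G N}

instance socle_normal : (socle G).Normal := by
  constructor
  intro n hn g
  have h : socle G ≤ (socle G).comap (MulAut.conj g).toMonoidHom := by
    rw [socle]
    apply sSup_le
    intro N hN x hx
    have h1 : (MulAut.conj g).toMonoidHom x ∈ N := by
      simpa [MulAut.conj_apply] using hN.1.conj_mem x hx g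
    exact Subgroup.mem_comap.2 (le_sSup hN h1)
  have h2 := h hn
  simpa [MulAut.conj_apply] using h2

/-- The action of `G` (by conjugation, through `f : G →* Q`) on the socle of `Q`. -/
def socAct {Q : Type*} [Group Q] (f : G →* Q) : G →* MulAut (socle Q) :=
  MulAut.conjNormal.comp f

/-- The diagonal action of `G` on `V × V` induced by an action on `V`. -/
def prodAct {V : Type*} [Group V] (a : G →* MulAut V) : G →* MulAut (V × V) where
  toFun g := MulEquiv.prodCongr (a g) (a g)
  map_one' := by
    ext x <;> simp [MulEquiv.prodCongr, MulAut.one_apply]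
  map_mul' g h := by
    ext x <;> simp [MulEquiv.prodCongr, MulAut.mul_apply]

/-- The diagonal action of `H` on `V^u` induced by an action on `V`. -/
def diagAct (H : Type*) [Group H] {V : Type*} [Group V] (b : H →* MulAut V) (u : ℕ) :
    H →* MulAut (Fin u → V) where
  toFun g := MulEquiv.piCongrRight fun _ => b g
  map_one' := by
    ext x i; simp
  map_mul' g h := by
    ext x i; simp [MulAut.mul_apply]

variable {G}

/-- The elements `gs 0, …, gs (k-1)` of `G` satisfy the `V`-property in `G`: they all lie
in the union of the `G`-conjugates of some maximal subgroup `M` of `G` such that the socle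
of `G/core_G(M)` is `G`-equivalent to `V` or to `V × V`. -/
def SatisfyVProperty {V : Type*} [Group V] (a : G →* MulAut V) {k : ℕ}
    (gs : Fin k → G) : Prop :=
  ∃ M : Subgroup G, IsCoatom M ∧
    (GEquiv G (socAct G (QuotientGroup.mk' M.normalCore)) a ∨
      GEquiv G (socAct G (QuotientGroup.mk' M.normalCore)) (prodAct G a)) ∧
    ∀ i, ∃ x : G, x * gs i * x⁻¹ ∈ M

/-- `P*_{G,V}(k)`: the probability that `k` independent uniformly random elements of `G`
satisfy the `V`-property in `G`. -/
noncomputable def pStar {V : Type*} [Group V] (a : G →* MulAut V) (k : ℕ) : ℝ :=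
  Nat.card {gs : Fin k → G // SatisfyVProperty a gs} / (Nat.card G : ℝ) ^ k

/-- The collection of normal subgroups `N` of `G` such that `G/N` is isomorphic to the
monolithic primitive group `L_V` associated to `V` (that is, `V ⋊ (G/C_G(V))` if `V` is
abelian and `G/C_G(V)` otherwise; here `C_G(V)` is the kernel of the action of `G` on
`V`) and the socle of `G/N` is `G`-equivalent to `V`. -/
def crownNormals {V : Type*} [Group V] (a : G →* MulAut V) : Set (Subgroup G) :=
  {N | ∃ _ : N.Normal,
    ((∀ x y : V, x * y = y * x) →
      Nonempty ((G ⧸ N) ≃* (V ⋊[QuotientGroup.kerLift a] (G ⧸ a.ker)))) ∧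
    (¬ (∀ x y : V, x * y = y * x) → Nonempty ((G ⧸ N) ≃* (G ⧸ a.ker))) ∧
    GEquiv G (socAct G (QuotientGroup.mk' N)) a}

/-- `R_G(V)`: the intersection of all normal subgroups `N` of `G` with `G/N ≅ L_V` and
`soc(G/N)` `G`-equivalent to `V`. -/
def crownRadical {V : Type*} [Group V] (a : G →* MulAut V) : Subgroup G :=
  sInf (crownNormals a)

instance crownRadical_normal {V : Type*} [Group V] (a : G →* MulAut V) :
    (crownRadical a).Normal := by
  constructor
  intro n hn g
  rw [crownRadical, Subgroup.mem_sInf] at hn ⊢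
  intro p hp
  obtain ⟨hpN, hrest⟩ := hp
  exact hpN.conj_mem n (hn p ⟨hpN, hrest⟩) g

/-- `I_G(V)`: the preimage in `G` of the socle of `G/R_G(V)`; the `V`-crown of `G` is
`I_G(V)/R_G(V)`. -/
def crownSocle {V : Type*} [Group V] (a : G →* MulAut V) : Subgroup G :=
  (socle (G ⧸ crownRadical a)).comap (QuotientGroup.mk' (crownRadical a))

/-- A chief series of `G`: a chain `⊥ = N_0 < N_1 < … < N_len = ⊤` of normal subgroups
of `G` in which each factor `N_{i+1}/N_i` is a chief factor of `G`. -/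
structure ChiefSeries (G : Type*) [Group G] where
  len : ℕ
  ser : Fin (len + 1) → Subgroup G
  bot_eq : ser 0 = ⊥
  top_eq : ser (Fin.last len) = ⊤
  chief : ∀ i : Fin len, IsChiefFactorPair G (ser i.succ) (ser i.castSucc)

/-- `δ_V(G)` (for a `G`-module `V`): the number of complemented factors in the chief
series `S` of `G` which are `G`-isomorphic to `V`. -/
noncomputable def deltaIso {V : Type*} [Group V] (a : G →* MulAut V)
    (S : ChiefSeries G) : ℕ :=
  Nat.card {i : Fin S.len //
    IsComplementedFactor G (S.ser i.succ) (S.ser i.castSucc) ∧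
    RepresentsFactor G a (S.ser i.succ) (S.ser i.castSucc)}

/-- The chief factor `X/Y` of `G` is `G`-equivalent to the `G`-group `(V, a)`. -/
def FactorGEquiv (X Y : Subgroup G) {V : Type*} [Group V] (a : G →* MulAut V) : Prop :=
  ∃ (W : Type) (_ : Group W) (b : G →* MulAut W),
    RepresentsFactor G b X Y ∧ GEquiv G b a

/-- `δ_V(G)` (for a `G`-group `V`): the number of non-Frattini factors in the chief
series `S` of `G` which are `G`-equivalent to `V`. -/
noncomputable def deltaEquiv {V : Type*} [Group V] (a : G →* MulAut V)
    (S : ChiefSeries G) : ℕ :=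
  Nat.card {i : Fin S.len //
    ¬ IsFrattiniFactor G (S.ser i.succ) (S.ser i.castSucc) ∧
    FactorGEquiv (S.ser i.succ) (S.ser i.castSucc) a}

/-- Bundled `G`-group: a group together with an action of `G` by automorphisms. -/
structure GGroup (G : Type) [Group G] : Type 1 where
  carrier : Type
  [grp : Group carrier]
  act : G →* MulAut carrier

attribute [instance] GGroup.grp

/-- The action `b` of `H` on `V` is irreducible: `V` is nontrivial and has no proper
nontrivial (normal) `H`-invariant subgroup. -/
def IsIrreducibleGGroup (H : Type*) [Group H] {V : Type*} [Group V]
    (b : H →* MulAut V) : Prop :=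
  Nontrivial V ∧
    ∀ W : Subgroup V, W.Normal → (∀ (h : H) (v : V), v ∈ W → b h v ∈ W) → W = ⊥ ∨ W = ⊤

/-- The `H`-equivariant endomorphisms of `V` (for `H`-modules `V` this is
`End_H(V)`). -/
def EquivEnd (H : Type*) [Group H] {V : Type*} [Group V] (b : H →* MulAut V) :=
  {f : V →* V // ∀ (h : H) (v : V), f (b h v) = b h (f v)}

/-- `q_V := |End_H(V)|`. -/
noncomputable def endCard (H : Type*) [Group H] {V : Type*} [Group V]
    (b : H →* MulAut V) : ℕ :=
  Nat.card (EquivEnd H b)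

/-- `n_V := dim_{End_H(V)} V`, characterised by `|End_H(V)| ^ n_V = |V|` (for a finite
irreducible `H`-module `V`, `End_H(V)` is a field and `V` a vector space over it). -/
noncomputable def dimEnd (H : Type*) [Group H] {V : Type*} [Group V]
    (b : H →* MulAut V) : ℕ :=
  sInf {n : ℕ | endCard H b ^ n = Nat.card V}

/-- The set of derivations `ζ : H → V` (satisfying `ζ(h₁h₂) = ζ(h₁)^{h₂} · ζ(h₂)`). -/
def DerSet (H : Type*) [Group H] {V : Type*} [Group V] (b : H →* MulAut V) :
    Set (H → V) :=
  {ζ | ∀ h₁ h₂ : H, ζ (h₁ * h₂) = b h₂ (ζ h₁) * ζ h₂}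

/-- The set of inner derivations `h ↦ [h,v] = v^h · v⁻¹`. -/
def IderSet (H : Type*) [Group H] {V : Type*} [Group V] (b : H →* MulAut V) :
    Set (H → V) :=
  {ζ | ∃ v : V, ∀ h : H, ζ h = b h v * v⁻¹}

/-- `m := dim_{End_H(V)} H¹(H,V)` where `H¹(H,V) = Der(H,V)/Ider(H,V)`, characterised by
`|End_H(V)| ^ m · |Ider(H,V)| = |Der(H,V)|`. -/
noncomputable def h1Dim (H : Type*) [Group H] {V : Type*} [Group V]
    (b : H →* MulAut V) : ℕ :=
  sInf {m : ℕ | endCard H b ^ m * Nat.card (IderSet H b) = Nat.card (DerSet H b)}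

/-- The probability that a uniformly random element of `H` fixes a nonzero (i.e.
non-identity) vector of `V`. -/
noncomputable def fixProb (H : Type*) [Group H] {V : Type*} [Group V]
    (b : H →* MulAut V) : ℝ :=
  Nat.card {h : H // ∃ v : V, v ≠ 1 ∧ b h v = v} / (Nat.card H : ℝ)

/-- `A` is a set of representatives for the irreducible `G`-modules which are
`G`-isomorphic to a chief factor of `G` satisfying `P`:  every member of `A` is an
irreducible abelian `G`-group `G`-isomorphic to some chief factor satisfying `P`, and
every chief factor of `G` satisfying `P` is `G`-isomorphic to exactly one member
of `A`. -/
def IsModuleRepSet {G : Type} [Group G] (P : Subgroup G → Subgroup G → Prop)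
    (A : Finset (GGroup G)) : Prop :=
  (∀ V ∈ A, (∀ x y : V.carrier, x * y = y * x) ∧ IsIrreducibleGGroup G V.act ∧
      ∃ X Y : Subgroup G, IsChiefFactorPair G X Y ∧ P X Y ∧ RepresentsFactor G V.act X Y) ∧
  ∀ X Y : Subgroup G, IsChiefFactorPair G X Y → P X Y →
    ∃! V : GGroup G, V ∈ A ∧ RepresentsFactor G V.act X Y

/-- `A` is a set of representatives for the irreducible `G`-groups which are
`G`-equivalent to a chief factor of `G` satisfying `P`. -/
def IsGGroupRepSet {G : Type} [Group G] (P : Subgroup G → Subgroup G → Prop)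
    (A : Finset (GGroup G)) : Prop :=
  (∀ V ∈ A, IsIrreducibleGGroup G V.act ∧
      ∃ X Y : Subgroup G, IsChiefFactorPair G X Y ∧ P X Y ∧ FactorGEquiv X Y V.act) ∧
  ∀ X Y : Subgroup G, IsChiefFactorPair G X Y → P X Y →
    ∃! V : GGroup G, V ∈ A ∧ FactorGEquiv X Y V.act

open Classical in
/-- Number of fixed points of `g` on `X`. -/
noncomputable def fx (X : Type*) [Fintype X] {H : Type*} [Group H] [MulAction H X] (h : H) : ℕ :=
  (Finset.univ.filter fun x : X => h • x = x).card

set_option linter.unusedSectionVars false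

section core
variable {H X : Type*} [Group H] [Fintype H] [Fintype X] [MulAction H X]

lemma fx_conj (g h : H) : fx X (g * h * g⁻¹) = fx X h := by
  classical
  unfold fx
  symm
  refine Finset.card_bij (fun x _ => g • x) ?_ ?_ ?_
  · intro x hx
    simp only [Finset.mem_filter, Finset.mem_univ, true_and] at hx ⊢
    simp [mul_smul, hx]
  · intro x _ y _ h
    exact smul_left_cancel g h
  · intro y hy
    simp only [Finset.mem_filter, Finset.mem_univ, true_and] at hy
    refine ⟨g⁻¹ • y, ?_, by simp⟩
    simp only [Finset.mem_filter, Finset.mem_univ, true_and]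
    rw [eq_inv_smul_iff]
    simpa [mul_smul] using hy

lemma fx_inv (h : H) : fx X h⁻¹ = fx X h := by
  classical
  unfold fx
  congr 1
  ext x
  simp only [Finset.mem_filter, Finset.mem_univ, true_and]
  rw [inv_smul_eq_iff]
  exact eq_comm

open Classical in
lemma stabsum (f : H → ℕ) (hf : ∀ g h, f (g * h * g⁻¹) = f h) (g : H) (x : X) :
    ∑ h ∈ Finset.univ.filter (fun h : H => h • (g • x) = g • x), f h =
      ∑ h ∈ Finset.univ.filter (fun h : H => h • x = x), f h := by
  symm
  refine Finset.sum_bij (fun h _ => g * h * g⁻¹) ?_ ?_ ?_ ?_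
  · intro h hx
    simp only [Finset.mem_filter, Finset.mem_univ, true_and] at hx ⊢
    simp [mul_smul, hx]
  · intro a _ b _ h
    simpa using h
  · intro k hy
    simp only [Finset.mem_filter, Finset.mem_univ, true_and] at hy
    refine ⟨g⁻¹ * k * g, ?_, by group⟩
    simp only [Finset.mem_filter, Finset.mem_univ, true_and]
    rw [mul_smul, mul_smul, inv_smul_eq_iff]
    exact hy
  · intro a _
    rw [hf]

open Classical in
lemma orbsum (f : H → ℕ) (hf : ∀ g h, f (g * h * g⁻¹) = f h) (x : X) :
    ∑ h : H, f h * (Finset.univ.filter fun y : X => y ∈ MulAction.orbit H x ∧ h • y = y).card =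
      (MulAction.orbit H x).ncard * ∑ h ∈ Finset.univ.filter (fun h : H => h • x = x), f h := by
  have h1 : ∀ h : H, f h * (Finset.univ.filter fun y : X =>
        y ∈ MulAction.orbit H x ∧ h • y = y).card =
      ∑ y ∈ Finset.univ.filter (fun y : X => y ∈ MulAction.orbit H x),
        if h • y = y then f h else 0 := by
    intro h
    rw [← Finset.sum_filter, Finset.filter_filter, Finset.sum_const, smul_eq_mul, mul_comm]
  simp_rw [h1]
  rw [Finset.sum_comm]
  have h2 : ∀ y ∈ Finset.univ.filter (fun y : X => y ∈ MulAction.orbit H x),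
      (∑ h : H, if h • y = y then f h else 0) =
        ∑ h ∈ Finset.univ.filter (fun h : H => h • x = x), f h := by
    intro y hy
    simp only [Finset.mem_filter, Finset.mem_univ, true_and] at hy
    obtain ⟨g, rfl⟩ := hy
    rw [← Finset.sum_filter]
    exact stabsum f hf g x
  rw [Finset.sum_congr rfl h2, Finset.sum_const, smul_eq_mul]
  congr 1
  rw [← Set.ncard_coe_finset]
  congr 1
  ext y
  simp

lemma orbit_mul_stab (x : X) :
    (MulAction.orbit H x).ncard * Nat.card (MulAction.stabilizer H x) = Nat.card H := by
  rw [← MulAction.index_stabilizer, mul_comm]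
  exact Subgroup.card_mul_index _

/-- a stabilizer is small -/
lemma stab_sq (L : ℕ) (hW : Nat.card {h : H // fx X h ≠ 1} ≤ L)
    (hfix : ∀ x : X, ∃ h : H, h • x ≠ x) (x : X) :
    Nat.card (MulAction.stabilizer H x) ^ 2 ≤ L * Nat.card H := by
  classical
  obtain ⟨g, hg⟩ := hfix x
  set S := MulAction.stabilizer H x with hS
  set T := MulAction.stabilizer H (g • x) with hT
  have h1 : T.index = S.index := by
    rw [hS, hT, MulAction.index_stabilizer, MulAction.index_stabilizer]
    rw [MulAction.orbit_smul]
  have h2 : Nat.card S = Nat.card (T ⊓ S : Subgroup H) * T.relIndex S := by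
    have := Subgroup.card_mul_index (T.subgroupOf S)
    rw [← this]
    congr 1
    exact (Nat.card_congr (Subgroup.subgroupOfEquivOfLe (inf_le_right : T ⊓ S ≤ S)).toEquiv).symm ▸ by
      rw [Subgroup.inf_subgroupOf_right]
  have h3 : T.relIndex S ≤ T.index := by
    rw [← Subgroup.relIndex_top_right T]
    refine Subgroup.relIndex_le_of_le_right le_top ?_
    rw [Subgroup.relIndex_top_right]
    exact Subgroup.index_ne_zero_of_finite
  have h4 : Nat.card (T ⊓ S : Subgroup H) ≤ L := by
    refine le_trans ?_ hW
    refine Nat.card_le_card_of_injective (fun h => ⟨h.1, ?_⟩) ?_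
    · have h5 : (h : H) • (g • x) = g • x ∧ (h : H) • x = x := ⟨h.2.1, h.2.2⟩
      intro hc
      unfold fx at hc
      rw [Finset.card_eq_one] at hc
      obtain ⟨a, ha⟩ := hc
      have e1 : g • x = a := by
        rw [← Finset.mem_singleton, ← ha]; simp [h5.1]
      have e2 : x = a := by
        rw [← Finset.mem_singleton, ← ha]; simp [h5.2]
      exact hg (e1.trans e2.symm)
    · intro a b hab
      have hab2 : (a : H) = (b : H) := congrArg (fun z : {h : H // fx X h ≠ 1} => z.1) hab
      exact Subtype.ext hab2
  have h6 := Subgroup.card_mul_index S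
  rw [h1] at h3
  calc Nat.card S ^ 2 = Nat.card S * Nat.card S := by ring
    _ ≤ (L * S.index) * Nat.card S := by
        gcongr
        rw [h2]
        gcongr
    _ = L * Nat.card H := by rw [← h6]; ring

lemma cent_index (L : ℕ) (hW : Nat.card {h : H // fx X h ≠ 1} ≤ L) (w : H) (hw : fx X w ≠ 1) :
    (Subgroup.centralizer {w} : Subgroup H).index ≤ L := by
  refine le_trans ?_ hW
  unfold Subgroup.index
  refine Nat.card_le_card_of_injective (Quotient.lift (fun h : H =>
    (⟨h * w * h⁻¹, by rw [fx_conj]; exact hw⟩ : {h : H // fx X h ≠ 1})) ?_) ?_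
  · intro a b hab
    have h1 : a⁻¹ * b ∈ Subgroup.centralizer {w} := QuotientGroup.leftRel_apply.1 hab
    rw [Subgroup.mem_centralizer_singleton_iff] at h1
    apply Subtype.ext
    show a * w * a⁻¹ = b * w * b⁻¹
    have h2 : a * (a⁻¹ * b * w) * b⁻¹ = a * (w * (a⁻¹ * b)) * b⁻¹ := by rw [h1]
    have h3 : a * (a⁻¹ * b * w) * b⁻¹ = b * w * b⁻¹ := by group
    have h4 : a * (w * (a⁻¹ * b)) * b⁻¹ = a * w * a⁻¹ := by group
    rw [← h3, ← h4, h2]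
  · intro q r
    refine Quotient.inductionOn₂ q r ?_
    intro a b hab
    have h0 : a * w * a⁻¹ = b * w * b⁻¹ := congrArg Subtype.val hab
    refine Quotient.sound ?_
    refine QuotientGroup.leftRel_apply.2 ?_
    rw [Subgroup.mem_centralizer_singleton_iff]
    have h3 : a⁻¹ * b * w = a⁻¹ * (b * w * b⁻¹) * b := by group
    rw [h3, ← h0]; group

lemma fx_uniq (u : H) (hu : fx X u = 1) : ∃ x : X, u • x = x ∧ ∀ y : X, u • y = y → y = x := by
  classical
  unfold fx at hu
  rw [Finset.card_eq_one] at hu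
  obtain ⟨a, ha⟩ := hu
  have key : ∀ y : X, u • y = y ↔ y = a := by
    intro y
    have := Finset.ext_iff.1 ha y
    simpa using this
  exact ⟨a, (key a).2 rfl, fun y hy => (key y).1 hy⟩

lemma fx_zero_iff (u : H) : fx X u = 0 ↔ ∀ x : X, u • x ≠ x := by
  classical
  unfold fx
  rw [Finset.card_eq_zero, Finset.filter_eq_empty_iff]
  exact ⟨fun h x => h (Finset.mem_univ x), fun h x _ => h x⟩

lemma W_mul (L : ℕ) (hW : Nat.card {h : H // fx X h ≠ 1} ≤ L)
    (hfix : ∀ x : X, ∃ h : H, h • x ≠ x) (hm : L ^ 5 < Nat.card H) (a b : H)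
    (ha : fx X a ≠ 1) (hb : fx X b ≠ 1) : fx X (a * b) ≠ 1 := by
  intro hab
  obtain ⟨x, hx, hux⟩ := fx_uniq (X := X) _ hab
  set C := (Subgroup.centralizer {a} ⊓ Subgroup.centralizer {b} : Subgroup H) with hC
  have h1 : C.index ≤ L * L :=
    (Subgroup.index_inf_le).trans (Nat.mul_le_mul (cent_index L hW a ha) (cent_index L hW b hb))
  have h2 : C ≤ MulAction.stabilizer H x := by
    intro c hc
    rw [hC, Subgroup.mem_inf, Subgroup.mem_centralizer_singleton_iff,
      Subgroup.mem_centralizer_singleton_iff] at hc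
    rw [MulAction.mem_stabilizer_iff]
    apply hux
    have : a * b * c = c * (a * b) := by
      rw [mul_assoc, ← hc.2, ← mul_assoc, ← hc.1, mul_assoc]
    rw [← mul_smul, this, mul_smul, hx]
  have h3 : Nat.card C ≤ Nat.card (MulAction.stabilizer H x) := Subgroup.card_le_of_le h2
  have h4 := Subgroup.card_mul_index C
  have h5 := stab_sq L hW hfix x
  have hpos : 0 < Nat.card H := Nat.card_pos
  have h6 : Nat.card H ≤ Nat.card (MulAction.stabilizer H x) * (L * L) := by
    rw [← h4]; gcongr
  have h7 : Nat.card H * Nat.card H ≤ L ^ 5 * Nat.card H := by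
    calc Nat.card H * Nat.card H ≤ (Nat.card (MulAction.stabilizer H x) * (L * L)) *
          (Nat.card (MulAction.stabilizer H x) * (L * L)) := Nat.mul_le_mul h6 h6
      _ = Nat.card (MulAction.stabilizer H x) ^ 2 * L ^ 4 := by ring
      _ ≤ (L * Nat.card H) * L ^ 4 := by gcongr
      _ = _ := by ring
  exact absurd (Nat.le_of_mul_le_mul_right h7 hpos) (not_le.2 hm)

open Classical in
theorem core_lemma (L : ℕ) (hW : Nat.card {h : H // fx X h ≠ 1} ≤ L)
    (hfix : ∀ x : X, ∃ h : H, h • x ≠ x) : Nat.card H ≤ L ^ 5 := by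
  by_contra hm
  rw [not_le] at hm
  have hpos : 0 < Nat.card H := Nat.card_pos
  have h1W : fx X (1 : H) ≠ 1 := by
    intro h
    obtain ⟨x, -, hx⟩ := fx_uniq (X := X) _ h
    obtain ⟨g, hg⟩ := hfix x
    exact hg (hx _ (one_smul _ _))
  have hL : 1 ≤ L := by
    refine le_trans ?_ hW
    have : Nonempty {h : H // fx X h ≠ 1} := ⟨⟨1, h1W⟩⟩
    exact Nat.card_pos
  set f : H → ℕ := fun h => if fx X h = 1 then 1 else 0 with hf
  have hfc : ∀ g h, f (g * h * g⁻¹) = f h := by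
    intro g h; simp only [hf, fx_conj]
  set U := Finset.univ.filter (fun h : H => fx X h = 1) with hU
  have hsumU : ∑ h : H, f h = U.card := by
    rw [hU, Finset.card_filter]
  have hUW : U.card + Nat.card {h : H // fx X h ≠ 1} = Nat.card H := by
    rw [Nat.card_eq_fintype_card, Nat.card_eq_fintype_card, Fintype.card_subtype, hU,
      Finset.card_filter_add_card_filter_not, Finset.card_univ]
  set P : X → ℕ := fun x => ∑ h ∈ Finset.univ.filter (fun h : H => h • x = x), f h with hP
  set O : X → ℕ := fun x => (MulAction.orbit H x).ncard with hO
  set c : X → H → ℕ := fun x h =>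
    (Finset.univ.filter fun y : X => y ∈ MulAction.orbit H x ∧ h • y = y).card with hc
  have horb : ∀ x, ∑ h : H, f h * c x h = O x * P x := fun x => orbsum f hfc x
  have hstab : ∀ x : X, (Finset.univ.filter (fun h : H => h • x = x)).card =
      Nat.card (MulAction.stabilizer H x) := by
    intro x
    rw [Nat.card_eq_fintype_card]
    exact (Fintype.card_of_subtype _ (by intro h; simp [MulAction.mem_stabilizer_iff])).symm
  have hOS : ∀ x : X, O x * Nat.card (MulAction.stabilizer H x) = Nat.card H := orbit_mul_stab
  -- half bound
  have hhalf : ∀ (x : X) (u : H), fx X u = 1 → u • x = x →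
      Nat.card (MulAction.stabilizer H x) ≤ 2 * P x := by
    intro x u hu hux
    rw [← hstab x]
    have e1 : P x = (Finset.univ.filter (fun h : H => h • x = x ∧ fx X h = 1)).card := by
      simp only [hP, hf]
      rw [← Finset.sum_filter, Finset.filter_filter, Finset.sum_const, smul_eq_mul, mul_one]
    have e2 := Finset.card_filter_add_card_filter_not
      (s := Finset.univ.filter (fun h : H => h • x = x)) (fun h => fx X h = 1)
    rw [Finset.filter_filter, Finset.filter_filter] at e2
    have e3 : (Finset.univ.filter (fun h : H => h • x = x ∧ ¬ fx X h = 1)).card ≤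
        (Finset.univ.filter (fun h : H => h • x = x ∧ fx X h = 1)).card := by
      refine Finset.card_le_card_of_injOn (fun w => u * w) ?_ ?_
      · intro w hw
        simp only [Finset.coe_filter, Finset.mem_univ, true_and, Set.mem_ofPred_eq] at hw ⊢
        refine ⟨by rw [mul_smul, hw.1, hux], ?_⟩
        by_contra hn
        have h1 : fx X w⁻¹ ≠ 1 := by rw [fx_inv]; exact hw.2
        have h2 := W_mul L hW hfix hm _ _ hn h1
        rw [mul_inv_cancel_right] at h2
        exact h2 hu
      · intro a _ b _ h
        exact mul_left_cancel h
    omega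
  -- pick u
  have hUne : ∃ u : H, fx X u = 1 := by
    by_contra hn
    push Not at hn
    have : U.card = 0 := by
      rw [hU, Finset.card_eq_zero, Finset.filter_eq_empty_iff]
      intro h _; exact hn h
    have h5 : L ≤ L ^ 5 := Nat.le_self_pow (by norm_num) L
    omega
  obtain ⟨u, hu⟩ := hUne
  obtain ⟨x, hx, hux⟩ := fx_uniq (X := X) u hu
  have hxx := hhalf x u hu hx
  have hcx : ∀ (y : X) (h : H), fx X h = 1 → c y h ≤ 1 := by
    intro y h hh
    rw [← hh]
    unfold fx
    refine Finset.card_le_card ?_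
    intro z
    simp only [Finset.mem_filter, Finset.mem_univ, true_and]
    exact fun h => h.2
  have hUlt : U.card < Nat.card H := by
    have : Nonempty {h : H // fx X h ≠ 1} := ⟨⟨1, h1W⟩⟩
    have : 0 < Nat.card {h : H // fx X h ≠ 1} := Nat.card_pos
    omega
  -- all unique fixed points in the orbit of x
  have hall : ∀ v : H, fx X v = 1 → ∀ y : X, v • y = y → y ∈ MulAction.orbit H x := by
    intro v hv y hy
    by_contra hyx
    have hyy := hhalf y v hv hy
    have hdis : ∀ h : H, f h * c x h + f h * c y h ≤ f h := by
      intro h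
      by_cases hh : fx X h = 1
      · simp only [hf, hh, if_true, one_mul]
        rw [← hh]
        simp only [hc]
        unfold fx
        rw [← Finset.card_union_of_disjoint]
        · refine Finset.card_le_card ?_
          intro z
          simp only [Finset.mem_union, Finset.mem_filter, Finset.mem_univ, true_and]
          rintro (h | h) <;> exact h.2
        · rw [Finset.disjoint_left]
          intro z hz1 hz2
          simp only [Finset.mem_filter, Finset.mem_univ, true_and] at hz1 hz2
          apply hyx
          have a1 := MulAction.orbit_eq_iff.2 hz1.1
          have a2 := MulAction.orbit_eq_iff.2 hz2.1
          rw [← a1, a2]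
          exact MulAction.mem_orbit_self y
      · simp [hf, hh]
    have h1 := Finset.sum_le_sum (s := Finset.univ) (fun h _ => hdis h)
    rw [Finset.sum_add_distrib, horb, horb, hsumU] at h1
    have h2 : Nat.card H ≤ 2 * (O x * P x) := by
      rw [← hOS x]
      calc _ ≤ O x * (2 * P x) := Nat.mul_le_mul_left _ hxx
        _ = _ := by ring
    have h3 : Nat.card H ≤ 2 * (O y * P y) := by
      rw [← hOS y]
      calc _ ≤ O y * (2 * P y) := Nat.mul_le_mul_left _ hyy
        _ = _ := by ring
    omega
  have hUle : U.card ≤ O x * P x := by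
    rw [← hsumU, ← horb]
    refine Finset.sum_le_sum ?_
    intro h _
    by_cases hh : fx X h = 1
    · obtain ⟨y, hy, -⟩ := fx_uniq (X := X) h hh
      have : 1 ≤ c x h := by
        refine Finset.card_pos.2 ⟨y, ?_⟩
        simp only [Finset.mem_filter, Finset.mem_univ, true_and]
        exact ⟨hall h hh y hy, hy⟩
      exact Nat.le_mul_of_pos_right _ this
    · simp [hf, hh]
  have hPlt : P x + 1 ≤ Nat.card (MulAction.stabilizer H x) := by
    rw [← hstab x, Finset.card_eq_sum_ones]
    refine Nat.succ_le_of_lt (Finset.sum_lt_sum ?_ ⟨1, by simp, ?_⟩)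
    · intro i _; simp only [hf]; split_ifs <;> omega
    · simp only [hf, if_neg h1W]; omega
  have hOL : O x ≤ L := by
    have h1 : O x * (P x + 1) ≤ Nat.card H := by
      rw [← hOS x]; exact Nat.mul_le_mul_left _ hPlt
    rw [mul_add, mul_one] at h1
    omega
  have h5 := stab_sq L hW hfix x
  have h6 : Nat.card H ≤ L * Nat.card (MulAction.stabilizer H x) := by
    rw [← hOS x]; exact Nat.mul_le_mul_right _ hOL
  have h7 : Nat.card H * Nat.card H ≤ L ^ 5 * Nat.card H := by
    calc Nat.card H * Nat.card H ≤ (L * Nat.card (MulAction.stabilizer H x)) *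
          (L * Nat.card (MulAction.stabilizer H x)) := Nat.mul_le_mul h6 h6
      _ = Nat.card (MulAction.stabilizer H x) ^ 2 * L ^ 2 := by ring
      _ ≤ (L * Nat.card H) * L ^ 2 := by gcongr
      _ = L ^ 3 * Nat.card H := by ring
      _ ≤ _ := by gcongr; omega
  exact absurd (Nat.le_of_mul_le_mul_right h7 hpos) (not_le.2 hm)

end core


section trans
variable {G : Type*} [Group G] [Fintype G]

open Classical in
/-- The elements of `G` lying in no conjugate of `M`. -/
noncomputable def der (M : Subgroup G) : Finset G :=
  Finset.univ.filter fun g => ∀ x : G, x⁻¹ * g * x ∉ M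

lemma mem_der (M : Subgroup G) (g : G) : g ∈ der M ↔ ∀ x : G, x⁻¹ * g * x ∉ M := by
  simp [der]

lemma smul_coset (M : Subgroup G) (g x : G) :
    g • (x : G ⧸ M) = (x : G ⧸ M) ↔ x⁻¹ * g * x ∈ M := by
  rw [MulAction.Quotient.smul_coe, smul_eq_mul, eq_comm, QuotientGroup.eq, mul_assoc]

lemma fx_eq_zero (M : Subgroup G) [Fintype (G ⧸ M)] (g : G) :
    fx (G ⧸ M) g = 0 ↔ g ∈ der M := by
  rw [fx_zero_iff, mem_der]
  constructor
  · intro h x hx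
    exact h (x : G ⧸ M) ((smul_coset M g x).2 hx)
  · intro h q
    induction q using QuotientGroup.induction_on with
    | H x => rw [ne_eq, smul_coset]; exact h x

open Classical in
lemma tsum_fx (M : Subgroup G) [Fintype (G ⧸ M)] (f : G → ℕ)
    (hf : ∀ g h, f (g * h * g⁻¹) = f h) :
    ∑ g : G, f g * fx (G ⧸ M) g =
      M.index * ∑ h ∈ Finset.univ.filter (fun h : G => h ∈ M), f h := by
  have h := orbsum f hf ((1 : G) : G ⧸ M)
  have e1 : MulAction.orbit G ((1 : G) : G ⧸ M) = Set.univ := MulAction.orbit_eq_univ _ _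
  rw [e1, Set.ncard_univ] at h
  simp only [Set.mem_univ, true_and, smul_coset, inv_one, one_mul, mul_one] at h
  unfold fx Subgroup.index
  convert h

open Classical in
lemma card_filter_mem (M : Subgroup G) :
    (Finset.univ.filter (fun h : G => h ∈ M)).card = Nat.card M := by
  rw [Nat.card_eq_fintype_card]
  exact (Fintype.card_of_subtype _ (by intro h; simp)).symm

lemma sum_fx (M : Subgroup G) [Fintype (G ⧸ M)] : ∑ g : G, fx (G ⧸ M) g = Nat.card G := by
  classical
  have h := tsum_fx M (fun _ => 1) (fun _ _ => rfl)
  simp only [one_mul] at h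
  rw [h, ← Finset.card_eq_sum_ones, card_filter_mem, mul_comm, Subgroup.card_mul_index]

lemma sum_fx_sub (M : Subgroup G) [Fintype (G ⧸ M)] :
    ∑ g : G, (fx (G ⧸ M) g - 1) = (der M).card := by
  classical
  have h1 : ∀ g : G, (fx (G ⧸ M) g - 1) + 1 = fx (G ⧸ M) g + if g ∈ der M then 1 else 0 := by
    intro g
    by_cases hg : g ∈ der M
    · have := (fx_eq_zero M g).2 hg
      simp [hg, this]
    · have := mt (fx_eq_zero M g).1 hg
      simp only [hg, if_false]; omega
  have h2 := Finset.sum_congr (rfl : (Finset.univ : Finset G) = Finset.univ) (fun g _ => h1 g)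
  rw [Finset.sum_add_distrib, Finset.sum_add_distrib, sum_fx, ← Finset.card_filter,
    ← Finset.card_eq_sum_ones, Finset.card_univ, Nat.card_eq_fintype_card] at h2
  have h3 : Finset.univ.filter (fun g => g ∈ der M) = der M := by ext; simp
  rw [h3] at h2
  omega

lemma fx_one (M : Subgroup G) [Fintype (G ⧸ M)] : fx (G ⧸ M) (1 : G) = M.index := by
  classical
  unfold fx Subgroup.index
  simp

lemma fx_le (M : Subgroup G) [Fintype (G ⧸ M)] (g : G) : fx (G ⧸ M) g ≤ M.index := by
  classical
  unfold fx Subgroup.index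
  rw [Nat.card_eq_fintype_card]
  exact Finset.card_le_univ _

lemma index_le (M : Subgroup G) : M.index ≤ (der M).card + 1 := by
  classical
  let := Fintype.ofFinite (G ⧸ M)
  rw [← sum_fx_sub M]
  have := Finset.single_le_sum (f := fun g : G => fx (G ⧸ M) g - 1) (fun _ _ => Nat.zero_le _)
    (Finset.mem_univ (1 : G))
  simp only [fx_one] at this
  omega

lemma card_le_der (M : Subgroup G) (hM : M ≠ ⊤) : Nat.card M ≤ (der M).card := by
  classical
  let := Fintype.ofFinite (G ⧸ M)
  let : Fintype (Quotient (MulAction.orbitRel M (G ⧸ M))) := Fintype.ofFinite _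
  -- Burnside for M
  have hB := MulAction.sum_card_fixedBy_eq_card_orbits_mul_card_group M (G ⧸ M)
  have hfe : ∀ h : M, Fintype.card (MulAction.fixedBy (G ⧸ M) h) = fx (G ⧸ M) (h : G) := by
    intro h
    unfold fx
    exact Fintype.card_of_subtype _ (by intro x; simp [MulAction.mem_fixedBy]; rfl)
  simp_rw [hfe] at hB
  have h2 : 1 < Fintype.card (Quotient (MulAction.orbitRel M (G ⧸ M))) := by
    rw [Fintype.one_lt_card_iff]
    have : ∃ g : G, g ∉ M := by
      by_contra hn
      push Not at hn
      exact hM (by ext g; simp [hn g])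
    obtain ⟨g, hg⟩ := this
    refine ⟨Quotient.mk _ ((1 : G) : G ⧸ M), Quotient.mk _ ((g : G) : G ⧸ M), ?_⟩
    intro hc
    have := Quotient.exact hc
    have h3 : ((1 : G) : G ⧸ M) ∈ MulAction.orbit M ((g : G) : G ⧸ M) := this
    obtain ⟨m, hm⟩ := h3
    have h4 : (((m : G) * g : G) : G ⧸ M) = ((1 : G) : G ⧸ M) := hm
    rw [eq_comm, QuotientGroup.eq] at h4
    simp only [inv_one, one_mul] at h4
    exact hg ((Subgroup.mul_mem_cancel_left M m.2).1 h4)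
  have hsum : ∑ h : M, fx (G ⧸ M) (h : G) =
      ∑ h ∈ Finset.univ.filter (fun h : G => h ∈ M), fx (G ⧸ M) h := by
    symm
    exact Finset.sum_subtype _ (by intro h; simp) _
  have hge : 2 * Nat.card M ≤ ∑ h ∈ Finset.univ.filter (fun h : G => h ∈ M), fx (G ⧸ M) h := by
    rw [← hsum, hB, Nat.card_eq_fintype_card]
    exact Nat.mul_le_mul_right _ h2
  have hge2 : Nat.card M ≤
      ∑ h ∈ Finset.univ.filter (fun h : G => h ∈ M), (fx (G ⧸ M) h - 1) := by
    have : ∑ h ∈ Finset.univ.filter (fun h : G => h ∈ M), fx (G ⧸ M) h ≤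
        ∑ h ∈ Finset.univ.filter (fun h : G => h ∈ M), ((fx (G ⧸ M) h - 1) + 1) :=
      Finset.sum_le_sum (fun h _ => by omega)
    rw [Finset.sum_add_distrib, ← Finset.card_eq_sum_ones, card_filter_mem] at this
    omega
  have h5 := tsum_fx M (fun g => fx (G ⧸ M) g - 1) (fun g h => by simp only [fx_conj])
  have h6 : ∑ g : G, (fx (G ⧸ M) g - 1) * fx (G ⧸ M) g ≤ M.index * (der M).card := by
    rw [← sum_fx_sub M, Finset.mul_sum]
    refine Finset.sum_le_sum (fun g _ => ?_)
    rw [mul_comm]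
    exact Nat.mul_le_mul_right _ (fx_le M g)
  rw [h5] at h6
  exact hge2.trans (Nat.le_of_mul_le_mul_left h6
    (Nat.pos_of_ne_zero Subgroup.index_ne_zero_of_finite))

/-- Two subgroups with few derangements have comparable derangement sets. -/
lemma der_subset (M N : Subgroup G) (hM : M ≠ ⊤) (b : ℕ)
    (hMb : (der M).card ≤ b) (hNb : (der N).card ≤ b)
    (hb : 243 * b ^ 10 * (b + 1) < Nat.card G ^ 6) : der N ⊆ der M := by
  classical
  let := Fintype.ofFinite (G ⧸ M)
  let := Fintype.ofFinite (G ⧸ N)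
  by_cases hfix : ∃ x : G ⧸ N, ∀ h : M, h • x = x
  · obtain ⟨x, hx⟩ := hfix
    induction x using QuotientGroup.induction_on with
    | H t =>
      have h1 : ∀ h ∈ M, t⁻¹ * h * t ∈ N := fun h hh => (smul_coset N h t).1 (hx ⟨h, hh⟩)
      intro g hg
      rw [mem_der] at hg ⊢
      intro y hy
      apply hg (y * t)
      have := h1 _ hy
      convert this using 1
      group
  · exfalso
    push Not at hfix
    set L := Nat.card {h : M // fx (G ⧸ N) h ≠ 1} with hL
    have hcore : Nat.card M ≤ L ^ 5 := core_lemma (H := M) (X := G ⧸ N) L le_rfl hfix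
    have hLeq : L = ∑ h ∈ Finset.univ.filter (fun h : G => h ∈ M),
        (if fx (G ⧸ N) h ≠ 1 then 1 else 0) := by
      rw [Finset.sum_subtype (p := fun h => h ∈ M) _ (by intro h; simp), hL,
        Nat.card_eq_fintype_card, Fintype.card_subtype, Finset.card_filter]
      rfl
    have h5 := tsum_fx M (fun g => if fx (G ⧸ N) g ≠ 1 then 1 else 0)
      (fun g h => by simp only [fx_conj])
    rw [← hLeq] at h5
    have h6 : ∑ g : G, (if fx (G ⧸ N) g ≠ 1 then 1 else 0) * fx (G ⧸ M) g ≤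
        ∑ g : G, ((if g ∈ der N then 1 else 0) + (fx (G ⧸ N) g - 1) + (fx (G ⧸ M) g - 1)) := by
      refine Finset.sum_le_sum (fun g _ => ?_)
      by_cases h1 : fx (G ⧸ N) g = 1
      · simp [h1]
      · by_cases h0 : fx (G ⧸ N) g = 0
        · have := (fx_eq_zero N g).1 h0
          simp [h0, this]; omega
        · have := mt (fx_eq_zero N g).2 h0
          simp [h1, this]; omega
    have h3 : Finset.univ.filter (fun g => g ∈ der N) = der N := by ext; simp
    rw [Finset.sum_add_distrib, Finset.sum_add_distrib, sum_fx_sub, sum_fx_sub,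
      ← Finset.card_filter, h3, h5] at h6
    have h7 : M.index * L ≤ 3 * b := by omega
    have h8 : M.index ≤ b + 1 := (index_le M).trans (by omega)
    have h9 : Nat.card M ≤ b := (card_le_der M hM).trans hMb
    have h10 := Subgroup.card_mul_index M
    have hpos : 0 < Nat.card G := Nat.card_pos
    -- |G| L ≤ 3 b^2
    have h11 : Nat.card G * L ≤ 3 * b * b := by
      rw [← h10, mul_assoc, mul_comm]
      exact Nat.mul_le_mul h7 h9
    have h12 : Nat.card G ≤ L ^ 5 * (b + 1) := by
      rw [← h10]; exact Nat.mul_le_mul hcore h8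
    have h13 : Nat.card G ^ 6 ≤ 243 * b ^ 10 * (b + 1) := by
      calc Nat.card G ^ 6 = Nat.card G ^ 5 * Nat.card G := by ring
        _ ≤ Nat.card G ^ 5 * (L ^ 5 * (b + 1)) := by gcongr
        _ = (Nat.card G * L) ^ 5 * (b + 1) := by ring
        _ ≤ (3 * b * b) ^ 5 * (b + 1) := by gcongr
        _ = _ := by ring
    omega

lemma der_eq (M N : Subgroup G) (hM : M ≠ ⊤) (hN : N ≠ ⊤) (b : ℕ)
    (hMb : (der M).card ≤ b) (hNb : (der N).card ≤ b)
    (hb : 243 * b ^ 10 * (b + 1) < Nat.card G ^ 6) : der M = der N :=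
  Finset.Subset.antisymm (der_subset N M hN b hNb hMb hb) (der_subset M N hM b hMb hNb hb)

lemma der_sq (M : Subgroup G) (hM : M ≠ ⊤) :
    Nat.card G ≤ (der M).card * ((der M).card + 1) := by
  rw [← Subgroup.card_mul_index M]
  exact Nat.mul_le_mul (card_le_der M hM) (index_le M)

lemma der_pos (M : Subgroup G) (hM : M ≠ ⊤) : 1 ≤ (der M).card :=
  le_trans Nat.card_pos (card_le_der M hM)

/-- The number of subgroups. -/
lemma subgroup_gen (H : Subgroup G) (k : ℕ) : ∃ f : Fin k → G,
    Subgroup.closure (Set.range f) ≤ H ∧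
    (Subgroup.closure (Set.range f) = H ∨ 2 ^ k ≤ Nat.card (Subgroup.closure (Set.range f))) := by
  induction k with
  | zero =>
    refine ⟨Fin.elim0, ?_, Or.inr ?_⟩
    · rw [Subgroup.closure_le]; rintro _ ⟨i, -⟩; exact i.elim0
    · simp
  | succ k ih =>
    obtain ⟨f, hf, hc⟩ := ih
    set K := Subgroup.closure (Set.range f) with hK
    have key : ∀ a ∈ H, Subgroup.closure (Set.range (Fin.cons a f : Fin (k + 1) → G)) ≤ H ∧
        K ≤ Subgroup.closure (Set.range (Fin.cons a f : Fin (k + 1) → G)) ∧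
        a ∈ Subgroup.closure (Set.range (Fin.cons a f : Fin (k + 1) → G)) := by
      intro a ha
      rw [Fin.range_cons]
      refine ⟨?_, ?_, Subgroup.subset_closure (Set.mem_insert _ _)⟩
      · rw [Subgroup.closure_le, Set.insert_subset_iff]
        exact ⟨ha, fun x hx => hf (Subgroup.subset_closure hx)⟩
      · exact Subgroup.closure_mono (Set.subset_insert _ _)
    by_cases hKH : K = H
    · obtain ⟨h1, h2, h3⟩ := key 1 H.one_mem
      exact ⟨_, h1, Or.inl (le_antisymm h1 (hKH ▸ h2))⟩
    · have hc' := hc.resolve_left hKH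
      obtain ⟨a, ha, haK⟩ := SetLike.exists_of_lt (lt_of_le_of_ne hf hKH)
      obtain ⟨h1, h2, h3⟩ := key a ha
      refine ⟨_, h1, Or.inr ?_⟩
      set K' := Subgroup.closure (Set.range (Fin.cons a f : Fin (k + 1) → G))
      have hd : Nat.card K ∣ Nat.card K' := Subgroup.card_dvd_of_le h2
      obtain ⟨c, hcc⟩ := hd
      have hK'pos : 0 < Nat.card K' := Nat.card_pos
      have hc2 : 2 ≤ c := by
        by_contra hlt
        have : c = 0 ∨ c = 1 := by omega
        rcases this with rfl | rfl
        · omega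
        · have : K = K' := Subgroup.eq_of_le_of_card_ge h2 (by omega)
          exact haK (this ▸ h3)
      rw [hcc, pow_succ]
      exact Nat.mul_le_mul hc' hc2

lemma card_subgroup_le : Nat.card (Subgroup G) ≤ Nat.card G ^ (Nat.log 2 (Nat.card G) + 1) := by
  have hs : Function.Surjective
      (fun f : Fin (Nat.log 2 (Nat.card G) + 1) → G => Subgroup.closure (Set.range f)) := by
    intro H
    obtain ⟨f, -, h⟩ := subgroup_gen H (Nat.log 2 (Nat.card G) + 1)
    refine ⟨f, h.resolve_right ?_⟩
    have h1 := Nat.lt_pow_succ_log_self (b := 2) (by norm_num) (Nat.card G)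
    have h2 : Nat.card (Subgroup.closure (Set.range f)) ≤ Nat.card G := Subgroup.card_le_card_group _
    omega
  have := Nat.card_le_card_of_surjective _ hs
  simpa [Nat.card_fun] using this

end trans


section prob

lemma sum_bound (a : ℕ → ℝ) (N x y : ℝ) (K : ℕ) (hN : 0 ≤ N) (hx : 0 ≤ x) (hx1 : x < 1)
    (hy : 0 ≤ y) (hy1 : y < 1) (ha : ∀ k, 0 ≤ a k) (ha1 : ∀ k, a k ≤ 1)
    (hab : ∀ k, a k ≤ N * x ^ k + y ^ k) :
    ∑' k, a k ≤ K + N * x ^ K / (1 - x) + 1 / (1 - y) := by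
  set c : ℕ → ℝ := fun k => if k < K then 1 else N * x ^ k with hc
  have h1 : HasSum c (K + N * x ^ K / (1 - x)) := by
    have h2 : HasSum (fun k => c (k + K)) (N * x ^ K / (1 - x)) := by
      have h3 := (hasSum_geometric_of_lt_one hx hx1).mul_left (N * x ^ K)
      rw [← div_eq_mul_inv] at h3
      have he : (fun k => c (k + K)) = fun i => N * x ^ K * x ^ i := by
        funext k
        show (if k + K < K then (1 : ℝ) else N * x ^ (k + K)) = N * x ^ K * x ^ k
        rw [if_neg (by omega), pow_add]; ring
      rw [he]
      exact h3
    have h4 := (hasSum_nat_add_iff K).1 h2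
    have h5 : ∑ i ∈ Finset.range K, c i = K := by
      rw [Finset.sum_congr rfl (g := fun _ => (1 : ℝ))]
      · simp
      · intro i hi
        simp [hc, Finset.mem_range.1 hi]
    rw [h5, add_comm] at h4
    exact h4
  have h6 : HasSum (fun k => y ^ k) (1 / (1 - y)) := by
    rw [one_div]; exact hasSum_geometric_of_lt_one hy hy1
  have h7 := h1.add h6
  have h8 : ∀ k, a k ≤ c k + y ^ k := by
    intro k
    simp only [hc]
    split_ifs with hk
    · have := ha1 k
      have := pow_nonneg hy k
      linarith
    · exact hab k
  rw [← h7.tsum_eq]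
  exact Summable.tsum_le_tsum h8 (Summable.of_nonneg_of_le ha h8 h7.summable) h7.summable

variable {G : Type*} [Group G] [Fintype G]

lemma q_eq (k : ℕ) : 1 - probInvGen G k =
    Nat.card {f : Fin k → G // ¬ InvGen G f} / (Nat.card G : ℝ) ^ k := by
  classical
  unfold probInvGen
  have hpos : (0 : ℝ) < (Nat.card G : ℝ) ^ k := by
    have : 0 < Nat.card G := Nat.card_pos
    positivity
  rw [eq_div_iff hpos.ne', sub_mul, div_mul_cancel₀ _ hpos.ne', one_mul, sub_eq_iff_eq_add]
  rw [← Nat.cast_pow, ← Nat.cast_add, Nat.cast_inj]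
  have : Nat.card G ^ k = Nat.card (Fin k → G) := by simp [Nat.card_fun]
  rw [this, Nat.card_eq_fintype_card, Nat.card_eq_fintype_card, Nat.card_eq_fintype_card,
    Fintype.card_subtype_compl]
  have := Fintype.card_subtype_le (fun f : Fin k → G => InvGen G f)
  omega

lemma count_le (b : ℕ) (E : Finset G)
    (hE : ∀ M : Subgroup G, M ≠ ⊤ → b ≤ (der M).card ∨ der M = E) (k : ℕ) :
    Nat.card {f : Fin k → G // ¬ InvGen G f} ≤
      Nat.card (Subgroup G) * (Nat.card G - b) ^ k + (Nat.card G - E.card) ^ k := by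
  classical
  let _ := Fintype.ofFinite (Subgroup G)
  set A : Finset G → Finset (Fin k → G) := fun D => Fintype.piFinset (fun _ => Dᶜ) with hA
  have hAc : ∀ D, (A D).card = (Nat.card G - D.card) ^ k := by
    intro D
    simp [hA, Fintype.card_piFinset, Finset.card_compl]
  set good := (Finset.univ : Finset (Subgroup G)).filter (fun M => b ≤ (der M).card) with hgood
  have hsub : (Finset.univ.filter fun f : Fin k → G => ¬ InvGen G f) ⊆
      (good.biUnion fun M => A (der M)) ∪ A E := by
    intro f hf
    simp only [Finset.mem_filter, Finset.mem_univ, true_and] at hf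
    unfold InvGen at hf
    push Not at hf
    obtain ⟨c, hc⟩ := hf
    set M := Subgroup.closure (Set.range fun i => c i * f i * (c i)⁻¹) with hM
    have hfM : f ∈ A (der M) := by
      simp only [hA, Fintype.mem_piFinset, Finset.mem_compl]
      intro i hi
      rw [mem_der] at hi
      apply hi (c i)⁻¹
      rw [inv_inv]
      exact Subgroup.subset_closure ⟨i, rfl⟩
    rw [Finset.mem_union, Finset.mem_biUnion]
    rcases hE M hc with h | h
    · left
      exact ⟨M, by simp [hgood, h], hfM⟩
    · right
      rw [← h]; exact hfM
  rw [Nat.card_eq_fintype_card, Fintype.card_subtype]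
  refine (Finset.card_le_card hsub).trans ((Finset.card_union_le _ _).trans ?_)
  rw [hAc E]
  refine Nat.add_le_add_right ?_ _
  refine (Finset.card_biUnion_le_card_mul good _ ((Nat.card G - b) ^ k) ?_).trans ?_
  · intro M hM
    rw [hAc]
    have : b ≤ (der M).card := (Finset.mem_filter.1 hM).2
    exact Nat.pow_le_pow_left (by omega) k
  · refine Nat.mul_le_mul_right _ ?_
    rw [Nat.card_eq_fintype_card]
    exact Finset.card_le_univ _

lemma q_le (b : ℕ) (hb : b ≤ Nat.card G) (E : Finset G)
    (hE : ∀ M : Subgroup G, M ≠ ⊤ → b ≤ (der M).card ∨ der M = E) (k : ℕ) :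
    1 - probInvGen G k ≤ (Nat.card (Subgroup G) : ℝ) * (1 - (b : ℝ) / Nat.card G) ^ k +
      (1 - (E.card : ℝ) / Nat.card G) ^ k := by
  have hn : (0 : ℝ) < Nat.card G := by
    have : 0 < Nat.card G := Nat.card_pos
    exact_mod_cast this
  have hEc : E.card ≤ Nat.card G := by
    rw [Nat.card_eq_fintype_card]; exact Finset.card_le_univ _
  rw [q_eq, div_le_iff₀ (by positivity)]
  have h := count_le b E hE k
  have h2 : (Nat.card {f : Fin k → G // ¬ InvGen G f} : ℝ) ≤
      (Nat.card (Subgroup G) : ℝ) * ((Nat.card G : ℝ) - b) ^ k +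
        ((Nat.card G : ℝ) - E.card) ^ k := by
    rw [← Nat.cast_sub hb, ← Nat.cast_sub hEc]
    exact_mod_cast h
  refine h2.trans (le_of_eq ?_)
  rw [add_mul, mul_assoc, ← mul_pow, ← mul_pow, sub_mul, sub_mul, one_mul,
    div_mul_cancel₀ _ hn.ne', div_mul_cancel₀ _ hn.ne']

lemma cheb_le (b : ℕ) (hb1 : 1 ≤ b) (hb : b ≤ Nat.card G) (E : Finset G) (hE1 : 1 ≤ E.card)
    (hE : ∀ M : Subgroup G, M ≠ ⊤ → b ≤ (der M).card ∨ der M = E) (K : ℕ) :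
    cheb G ≤ K + (Nat.card (Subgroup G) : ℝ) * (1 - (b : ℝ) / Nat.card G) ^ K *
      ((Nat.card G : ℝ) / b) + (Nat.card G : ℝ) / E.card := by
  have hn : (0 : ℝ) < Nat.card G := by
    have : 0 < Nat.card G := Nat.card_pos
    exact_mod_cast this
  have hEc : E.card ≤ Nat.card G := by
    rw [Nat.card_eq_fintype_card]; exact Finset.card_le_univ _
  have hbR : (b : ℝ) ≤ Nat.card G := by exact_mod_cast hb
  have hb1R : (1 : ℝ) ≤ b := by exact_mod_cast hb1
  have hER : (E.card : ℝ) ≤ Nat.card G := by exact_mod_cast hEc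
  have hE1R : (1 : ℝ) ≤ E.card := by exact_mod_cast hE1
  have h := sum_bound (fun k => 1 - probInvGen G k) (Nat.card (Subgroup G))
    (1 - (b : ℝ) / Nat.card G) (1 - (E.card : ℝ) / Nat.card G) K (by positivity)
    (by rw [sub_nonneg, div_le_one hn]; exact hbR)
    (by have : 0 < (b : ℝ) / Nat.card G := by positivity
        linarith)
    (by rw [sub_nonneg, div_le_one hn]; exact hER)
    (by have : 0 < (E.card : ℝ) / Nat.card G := by positivity
        linarith)
    (by intro k; simp only [q_eq]; positivity)
    (by intro k
        have : 0 ≤ probInvGen G k := by unfold probInvGen; positivity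
        linarith)
    (q_le b hb E hE)
  unfold cheb
  refine h.trans (le_of_eq ?_)
  rw [sub_sub_cancel, sub_sub_cancel, one_div_div, div_div_eq_mul_div, mul_div_assoc]

/-- crude bound -/
lemma cheb_small : cheb G ≤ (Nat.card (Subgroup G) : ℝ) * Nat.card G + 1 := by
  have hn : 0 < Nat.card G := Nat.card_pos
  have hnR : (0 : ℝ) < Nat.card G := by exact_mod_cast hn
  have hc : (Finset.univ : Finset G).card = Nat.card G := by
    rw [Finset.card_univ, Nat.card_eq_fintype_card]
  have h := cheb_le (G := G) 1 le_rfl hn Finset.univ (by rw [hc]; exact hn)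
    (fun M hM => Or.inl (der_pos M hM)) 0
  rw [hc, div_self hnR.ne'] at h
  simpa using h

/-- main bound for large groups -/
lemma cheb_large (b : ℕ) (hb1 : 1 ≤ b) (hb : b ≤ Nat.card G) (h4 : 4 ≤ Nat.card G)
    (hbig : 243 * b ^ 10 * (b + 1) < Nat.card G ^ 6) (K : ℕ) :
    cheb G ≤ K + (Nat.card (Subgroup G) : ℝ) * (1 - (b : ℝ) / Nat.card G) ^ K *
      ((Nat.card G : ℝ) / b) + (Real.sqrt (Nat.card G) + 2) := by
  have hn : 0 < Nat.card G := Nat.card_pos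
  have hc : (Finset.univ : Finset G).card = Nat.card G := by
    rw [Finset.card_univ, Nat.card_eq_fintype_card]
  have hex : ∃ E : Finset G, 1 ≤ E.card ∧ Nat.card G ≤ E.card * (E.card + 1) ∧
      ∀ M : Subgroup G, M ≠ ⊤ → b ≤ (der M).card ∨ der M = E := by
    by_cases hbad : ∃ M : Subgroup G, M ≠ ⊤ ∧ (der M).card ≤ b
    · obtain ⟨M₀, hM₀, hd⟩ := hbad
      refine ⟨der M₀, der_pos M₀ hM₀, der_sq M₀ hM₀, ?_⟩
      intro M hM
      by_cases hMb : b ≤ (der M).card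
      · exact Or.inl hMb
      · exact Or.inr (der_eq M M₀ hM hM₀ b (by omega) hd hbig)
    · push Not at hbad
      refine ⟨Finset.univ, by omega, by rw [hc]; nlinarith, ?_⟩
      intro M hM
      exact Or.inl (hbad M hM).le
  obtain ⟨E, hE1, hE2, hE⟩ := hex
  refine (cheb_le b hb1 hb E hE1 hE K).trans ?_
  gcongr
  set s := Real.sqrt (Nat.card G) with hs
  have hsq : s * s = Nat.card G := Real.mul_self_sqrt (by positivity)
  have hs0 : 0 ≤ s := Real.sqrt_nonneg _
  have hE2R : (Nat.card G : ℝ) ≤ E.card * (E.card + 1) := by exact_mod_cast hE2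
  have hE1R : (1 : ℝ) ≤ E.card := by exact_mod_cast hE1
  have h4R : (4 : ℝ) ≤ Nat.card G := by exact_mod_cast h4
  have hs2 : 2 ≤ s := by nlinarith
  have hse : s ≤ E.card + 1 := by nlinarith
  rw [div_le_iff₀ (by linarith), ← hsq]
  nlinarith

end prob

section asymp

open Filter

lemma ev_A : ∀ᶠ n : ℕ in atTop, 243 * ⌈(n : ℝ) ^ (0.53 : ℝ)⌉₊ ^ 10 *
    (⌈(n : ℝ) ^ (0.53 : ℝ)⌉₊ + 1) < n ^ 6 := by
  have h1 : Tendsto (fun n : ℕ => (n : ℝ) ^ (0.17 : ℝ)) atTop atTop :=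
    (tendsto_rpow_atTop (by norm_num)).comp tendsto_natCast_atTop_atTop
  filter_upwards [h1.eventually_gt_atTop 746496, eventually_ge_atTop 1] with n hn hn1
  have hn1R : (1 : ℝ) ≤ n := by exact_mod_cast hn1
  have hn0 : (0 : ℝ) < n := by linarith
  set t := (n : ℝ) ^ (0.53 : ℝ) with ht
  have ht1 : 1 ≤ t := Real.one_le_rpow hn1R (by norm_num)
  have hb : (⌈t⌉₊ : ℝ) ≤ 2 * t := by
    have := Nat.ceil_lt_add_one (a := t) (by linarith)
    linarith
  have hpow : t ^ 11 * (n : ℝ) ^ (0.17 : ℝ) = (n : ℝ) ^ 6 := by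
    rw [ht, ← Real.rpow_natCast, ← Real.rpow_mul hn0.le, ← Real.rpow_add hn0, ← Real.rpow_natCast]
    norm_num
  have : (243 * (⌈t⌉₊ : ℝ) ^ 10 * (⌈t⌉₊ + 1)) < (n : ℝ) ^ 6 := by
    calc (243 * (⌈t⌉₊ : ℝ) ^ 10 * (⌈t⌉₊ + 1)) ≤ 243 * (2 * t) ^ 10 * (2 * t + t) := by gcongr
      _ = t ^ 11 * 746496 := by ring
      _ < t ^ 11 * (n : ℝ) ^ (0.17 : ℝ) := by gcongr
      _ = _ := hpow
  exact_mod_cast this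

lemma ev_B (ε : ℝ) (hε : 0 < ε) : ∀ᶠ n : ℕ in atTop,
    (n : ℝ) ^ (Nat.log 2 n + 1) * (n : ℝ) *
      Real.exp (-(ε * Real.sqrt n * ((n : ℝ) ^ (0.53 : ℝ) / n))) ≤ 1 := by
  have h0 := (isLittleO_log_rpow_atTop (r := 0.015) (by norm_num)).bound
    (c := Real.sqrt ε / 2) (by positivity)
  have h1 := tendsto_natCast_atTop_atTop (R := ℝ) |>.eventually h0
  filter_upwards [h1, eventually_ge_atTop 3] with n hn hn3
  have hn3R : (3 : ℝ) ≤ n := by exact_mod_cast hn3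
  have hnpos : (0 : ℝ) < n := by linarith
  set l := Real.log n with hl
  have hl1 : 1 ≤ l := by
    rw [hl, Real.le_log_iff_exp_le hnpos]
    have := Real.exp_one_lt_d9
    linarith
  set r := (n : ℝ) ^ (0.015 : ℝ) with hr
  have hr0 : 0 < r := Real.rpow_pos_of_pos hnpos _
  rw [Real.norm_of_nonneg (by linarith), Real.norm_of_nonneg hr0.le] at hn
  have hrr : ε * Real.sqrt n * ((n : ℝ) ^ (0.53 : ℝ) / n) = ε * (r * r) := by
    rw [mul_assoc]
    congr 1
    rw [hr, ← Real.rpow_add hnpos, Real.sqrt_eq_rpow, ← mul_div_assoc, ← Real.rpow_add hnpos]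
    rw [div_eq_iff hnpos.ne']
    nth_rewrite 3 [← Real.rpow_one (n : ℝ)]
    rw [← Real.rpow_add hnpos]
    norm_num
  have hlog : (Nat.log 2 n : ℝ) ≤ 2 * l := by
    have h2 : (2 : ℝ) ^ (Nat.log 2 n) ≤ n := by
      exact_mod_cast Nat.pow_log_le_self 2 (by omega)
    have h3 := Real.log_le_log (by positivity) h2
    rw [Real.log_pow] at h3
    have h4 := Real.log_two_gt_d9
    have h5 : (0 : ℝ) ≤ Nat.log 2 n := by positivity
    nlinarith
  have hexp : (n : ℝ) ^ (Nat.log 2 n + 1) * (n : ℝ) = Real.exp ((Nat.log 2 n + 2 : ℝ) * l) := by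
    rw [← pow_succ, ← Real.exp_log hnpos, ← Real.exp_nat_mul]
    congr 1
    push_cast
    ring
  rw [hexp, hrr, ← Real.exp_add, Real.exp_le_one_iff]
  have hsq : Real.sqrt ε * Real.sqrt ε = ε := Real.mul_self_sqrt hε.le
  have h6 : l * l ≤ (Real.sqrt ε / 2 * r) * (Real.sqrt ε / 2 * r) := by
    apply mul_self_le_mul_self (by linarith) hn
  have h7 : (Real.sqrt ε / 2 * r) * (Real.sqrt ε / 2 * r) = ε * (r * r) / 4 := by
    calc _ = (Real.sqrt ε * Real.sqrt ε) * (r * r) / 4 := by ring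
      _ = _ := by rw [hsq]
  nlinarith

end asymp

/-- **Theorem 1(i)**: for every `ε > 0` there is a constant `c_ε` such that
`C(G) ≤ (1+ε)·√|G| + c_ε` for every finite group `G`. -/
theorem chebotarev_bound_of_eps (ε : ℝ) (hε : 0 < ε) :
    ∃ c : ℝ, ∀ (G : Type*) [Group G] [Finite G],
      cheb G ≤ (1 + ε) * Real.sqrt (Nat.card G) + c := by
  obtain ⟨n₀, hn₀⟩ := Filter.eventually_atTop.1 ((ev_A).and (ev_B ε hε))
  set m := n₀ + 4 with hm
  refine ⟨4 + ((m : ℝ) ^ (m + 1) * m + 1), ?_⟩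
  intro G _ _
  let _ := Fintype.ofFinite G
  have hnpos : 0 < Nat.card G := Nat.card_pos
  have hnR : (1 : ℝ) ≤ Nat.card G := by exact_mod_cast hnpos
  have hsub : (Nat.card (Subgroup G) : ℝ) ≤
      (Nat.card G : ℝ) ^ (Nat.log 2 (Nat.card G) + 1) := by
    exact_mod_cast card_subgroup_le (G := G)
  have hs0 : 0 ≤ Real.sqrt (Nat.card G) := Real.sqrt_nonneg _
  have hm1 : (1 : ℝ) ≤ m := by rw [hm]; push_cast; linarith [Nat.cast_nonneg (α := ℝ) n₀]
  by_cases hlt : Nat.card G < m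
  · have h1 := cheb_small (G := G)
    have hle : (Nat.card G : ℝ) ≤ m := by exact_mod_cast hlt.le
    have hlog : Nat.log 2 (Nat.card G) ≤ m := (Nat.log_le_self _ _).trans hlt.le
    have h2 : (Nat.card (Subgroup G) : ℝ) ≤ (m : ℝ) ^ (m + 1) :=
      hsub.trans ((pow_le_pow_left₀ (by positivity) hle _).trans
        (pow_le_pow_right₀ hm1 (by omega)))
    have h3 : (Nat.card (Subgroup G) : ℝ) * Nat.card G ≤ (m : ℝ) ^ (m + 1) * m := by gcongr
    have h4 : 0 ≤ (1 + ε) * Real.sqrt (Nat.card G) := by positivity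
    linarith
  · obtain ⟨hA, hB⟩ := hn₀ (Nat.card G) (by omega)
    set n := Nat.card G with hn
    set t := (n : ℝ) ^ (0.53 : ℝ) with ht
    set b := ⌈t⌉₊ with hb
    set K := ⌈ε * Real.sqrt n⌉₊ with hK
    have ht1 : 1 ≤ t := Real.one_le_rpow hnR (by norm_num)
    have hb1 : 1 ≤ b := Nat.one_le_ceil_iff.2 (by linarith)
    have hbn : b ≤ n := by
      rw [hb, Nat.ceil_le, ht]
      calc (n : ℝ) ^ (0.53 : ℝ) ≤ (n : ℝ) ^ (1 : ℝ) :=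
            Real.rpow_le_rpow_of_exponent_le hnR (by norm_num)
        _ = n := Real.rpow_one _
    have h := cheb_large (G := G) b hb1 hbn (by omega) hA K
    have hb1R : (1 : ℝ) ≤ b := by exact_mod_cast hb1
    have hbnR : (b : ℝ) ≤ n := by exact_mod_cast hbn
    have hn0 : (0 : ℝ) < n := by linarith
    have hx0 : 0 ≤ 1 - (b : ℝ) / n := by
      rw [sub_nonneg, div_le_one hn0]; exact hbnR
    have hxK : (1 - (b : ℝ) / n) ^ K ≤ Real.exp (-(ε * Real.sqrt n * (t / n))) := by
      calc (1 - (b : ℝ) / n) ^ K ≤ (Real.exp (-((b : ℝ) / n))) ^ K := by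
            refine pow_le_pow_left₀ hx0 ?_ K
            have := Real.add_one_le_exp (-((b : ℝ) / n))
            linarith
        _ = Real.exp (-(K * ((b : ℝ) / n))) := by
            rw [← Real.exp_nat_mul]; congr 1; ring
        _ ≤ _ := by
            rw [Real.exp_le_exp, neg_le_neg_iff]
            have e1 : ε * Real.sqrt n ≤ K := Nat.le_ceil _
            have e2 : t ≤ b := Nat.le_ceil _
            gcongr
    have hmid : (Nat.card (Subgroup G) : ℝ) * (1 - (b : ℝ) / n) ^ K * ((n : ℝ) / b) ≤ 1 := by
      calc (Nat.card (Subgroup G) : ℝ) * (1 - (b : ℝ) / n) ^ K * ((n : ℝ) / b)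
          ≤ (n : ℝ) ^ (Nat.log 2 n + 1) * Real.exp (-(ε * Real.sqrt n * (t / n))) * n := by
            gcongr
            exact div_le_self hn0.le hb1R
        _ = (n : ℝ) ^ (Nat.log 2 n + 1) * n * Real.exp (-(ε * Real.sqrt n * (t / n))) := by ring
        _ ≤ 1 := hB
    have hKle : (K : ℝ) ≤ ε * Real.sqrt n + 1 :=
      (Nat.ceil_lt_add_one (by positivity)).le
    have hpos : 0 ≤ (m : ℝ) ^ (m + 1) * m := by positivity
    linarith

end ChebotarevPaper
end

section
/- If G is a finite soluble group, then C(G) ≤ (5/3)·√|G|, with equality if and only if G ≅ C_2 × C_2. -/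
/-!
Definitions supporting the formalization of
"An upper bound on the Chebotarev invariant of a finite group" (Lucchini–Tracey).
-/

open scoped BigOperators

namespace ChebotarevPaper

/-! ### Tuples: probabilities and invariable generation -/

section Tuples

/-- The proportion of `k`-tuples lying in a set. -/
noncomputable def pr {G : Type} [Group G] {k : ℕ} (S : Set (Fin k → G)) : ℝ :=
  (S.ncard : ℝ) / (Nat.card G : ℝ) ^ k

/-- The proportion of `k`-tuples which do not invariably generate. -/
noncomputable def failP (G : Type) [Group G] (k : ℕ) : ℝ := 1 - probInvGen G k

theorem cardPos (G : Type) [Group G] [Finite G] : (0 : ℝ) < Nat.card G := by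
  exact_mod_cast Nat.card_pos

theorem pr_nonneg {G : Type} [Group G] {k : ℕ} (S : Set (Fin k → G)) : 0 ≤ pr S := by
  unfold pr; positivity

theorem pr_mono {G : Type} [Group G] [Finite G] {k : ℕ} {S T : Set (Fin k → G)}
    (h : S ⊆ T) : pr S ≤ pr T := by
  unfold pr
  have : S.ncard ≤ T.ncard := Set.ncard_le_ncard h (Set.toFinite _)
  gcongr

theorem pr_union_le {G : Type} [Group G] [Finite G] {k : ℕ} (S T : Set (Fin k → G)) :
    pr (S ∪ T) ≤ pr S + pr T := by
  unfold pr
  rw [← add_div]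
  have : (S ∪ T).ncard ≤ S.ncard + T.ncard := Set.ncard_union_le S T
  gcongr
  exact_mod_cast this

theorem pr_disj {G : Type} [Group G] [Finite G] {k : ℕ} {S T : Set (Fin k → G)}
    (h : Disjoint S T) : pr (S ∪ T) = pr S + pr T := by
  unfold pr
  rw [← add_div, Set.ncard_union_eq h (Set.toFinite _) (Set.toFinite _)]
  push_cast; rfl

theorem pr_univ {G : Type} [Group G] [Finite G] {k : ℕ} :
    pr (Set.univ : Set (Fin k → G)) = 1 := by
  unfold pr
  have := cardPos G
  rw [Set.ncard_univ]
  simp [Nat.card_pi]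

theorem failP_eq {G : Type} [Group G] [Finite G] (k : ℕ) :
    failP G k = pr {f : Fin k → G | ¬ InvGen G f} := by
  have h1 : probInvGen G k = pr {f : Fin k → G | InvGen G f} := by
    unfold probInvGen pr
    rfl
  have h2 := pr_disj (G := G) (k := k) (S := {f | InvGen G f}) (T := {f | ¬ InvGen G f})
    (by rw [Set.disjoint_left]; intro a h h'; exact h' h)
  have h3 : {f : Fin k → G | InvGen G f} ∪ {f | ¬ InvGen G f} = Set.univ := by
    ext f; simp [em]
  rw [h3, pr_univ] at h2
  unfold failP
  rw [h1]; linarith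

theorem failP_nonneg {G : Type} [Group G] [Finite G] (k : ℕ) : 0 ≤ failP G k := by
  rw [failP_eq]; exact pr_nonneg _

theorem failP_le_one {G : Type} [Group G] [Finite G] (k : ℕ) : failP G k ≤ 1 := by
  rw [failP_eq, ← pr_univ (G := G) (k := k)]; exact pr_mono (Set.subset_univ _)

/-- Adding one more random element. -/
theorem pr_succ_le {G : Type} [Group G] [Finite G] {k : ℕ} (S : Set (Fin (k + 1) → G))
    (T : Set (Fin k → G)) (U : (Fin k → G) → Set G) (u : ℝ)
    (hU : ∀ t ∈ T, ((U t).ncard : ℝ) ≤ u * Nat.card G)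
    (hS : ∀ f ∈ S, Fin.tail f ∈ T ∧ f 0 ∈ U (Fin.tail f)) : pr S ≤ u * pr T := by
  classical
  have := Fintype.ofFinite G
  have hG := cardPos G
  have h1 : S.ncard ≤ (⋃ t ∈ T.toFinite.toFinset, (fun g : G => (Fin.cons g t : Fin (k+1) → G)) '' (U t)).ncard := by
    apply Set.ncard_le_ncard _ (Set.toFinite _)
    intro f hf
    simp only [Set.mem_iUnion]
    refine ⟨Fin.tail f, by simpa using (hS f hf).1, f 0, (hS f hf).2, by simp⟩
  have h2 : (⋃ t ∈ T.toFinite.toFinset, (fun g : G => (Fin.cons g t : Fin (k+1) → G)) '' (U t)).ncard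
      ≤ ∑ t ∈ T.toFinite.toFinset, (U t).ncard := by
    refine (Finset.set_ncard_biUnion_le _ _).trans ?_
    apply Finset.sum_le_sum
    intro t _
    exact Set.ncard_image_le (Set.toFinite _)
  have h3 : ((∑ t ∈ T.toFinite.toFinset, (U t).ncard : ℕ) : ℝ) ≤ T.ncard * (u * Nat.card G) := by
    push_cast
    rw [Set.ncard_eq_toFinset_card T T.toFinite, ← nsmul_eq_mul]
    apply Finset.sum_le_card_nsmul
    intro t ht
    exact hU t (by simpa using ht)
  have h4 : (S.ncard : ℝ) ≤ T.ncard * (u * Nat.card G) := le_trans (by exact_mod_cast h1.trans h2) h3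
  unfold pr
  rw [div_le_iff₀ (by positivity), pow_succ]
  have : u * (T.ncard / (Nat.card G : ℝ) ^ k) * ((Nat.card G : ℝ) ^ k * Nat.card G) = T.ncard * (u * Nat.card G) := by
    field_simp
  rw [this]; exact h4

/-- Pulling back a set of tuples along a quotient map does not change its proportion. -/
theorem pr_quot {G : Type} [Group G] [Finite G] (N : Subgroup G) [N.Normal] {k : ℕ}
    (S : Set (Fin k → G ⧸ N)) :
    pr {f : Fin k → G | (fun i => (f i : G ⧸ N)) ∈ S} = pr S := by
  have hN := cardPos N
  have hQ := cardPos (G ⧸ N)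
  obtain ⟨e, he⟩ : ∃ e : G ≃ (G ⧸ N) × N, ∀ g, (e g).1 = (g : G ⧸ N) := by
    exact ⟨Subgroup.groupEquivQuotientProdSubgroup, fun g => rfl⟩
  have e2 : {f : Fin k → G | (fun i => (f i : G ⧸ N)) ∈ S} ≃ S × (Fin k → N) :=
    { toFun := fun f => (⟨fun i => (e (f.1 i)).1, by
          have := f.2
          simp only [he]; exact this⟩, fun i => (e (f.1 i)).2)
      invFun := fun p => ⟨fun i => e.symm (p.1.1 i, p.2 i), by
          have : (fun i => ((e.symm (p.1.1 i, p.2 i) : G) : G ⧸ N)) = p.1.1 := by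
            funext i; rw [← he]; simp
          change _ ∈ S
          rw [this]; exact p.1.2⟩
      left_inv := fun f => by ext i; simp
      right_inv := fun p => by ext i <;> simp }
  have hc := Nat.card_congr e2
  rw [Nat.card_prod, Nat.card_pi] at hc
  unfold pr
  rw [← Nat.card_coe_set_eq, hc, ← Nat.card_coe_set_eq, Subgroup.card_eq_card_quotient_mul_card_subgroup N]
  push_cast
  simp only [Finset.prod_const, Finset.card_univ, Fintype.card_fin]
  rw [mul_pow]
  field_simp

theorem invGen_map {G K : Type} [Group G] [Group K] (φ : G →* K) (hφ : Function.Surjective φ)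
    {k : ℕ} {f : Fin k → G} (h : InvGen G f) : InvGen K (fun i => φ (f i)) := by
  intro c
  choose d hd using fun i => hφ (c i)
  have h1 := congrArg (Subgroup.map φ) (h d)
  rw [MonoidHom.map_closure, Subgroup.map_top_of_surjective φ hφ] at h1
  rw [← h1]
  congr 1
  ext x
  simp [hd]

theorem invGen_of_tail {G : Type} [Group G] {k : ℕ} {f : Fin (k + 1) → G}
    (h : InvGen G (Fin.tail f)) : InvGen G f := by
  intro c
  have h1 := h (fun i => c i.succ)
  rw [eq_top_iff, ← h1]
  apply Subgroup.closure_mono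
  rintro _ ⟨i, rfl⟩
  exact ⟨i.succ, rfl⟩

/-- The set of elements with a conjugate in `M`. -/
def Meets {G : Type} [Group G] (M : Subgroup G) : Set G := {g | ∃ x, x * g * x⁻¹ ∈ M}

theorem not_invGen_of_meets {G : Type} [Group G] {k : ℕ} {f : Fin k → G} {M : Subgroup G}
    (hM : M ≠ ⊤) (h : ∀ i, f i ∈ Meets M) : ¬ InvGen G f := by
  intro hf
  choose c hc using h
  apply hM
  rw [eq_top_iff, ← hf c, Subgroup.closure_le]
  rintro _ ⟨i, rfl⟩
  exact hc i

/-- If a tuple invariably generates modulo the minimal normal abelian subgroup `N` but not `G`,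
then it meets a complement of `N`. -/
theorem exists_compl {G : Type} [Group G] {N : Subgroup G} [N.Normal] (hN : IsMinimalNormal G N)
    (hab : ∀ x ∈ N, ∀ y ∈ N, x * y = y * x) {k : ℕ} {f : Fin k → G}
    (h1 : InvGen (G ⧸ N) (fun i => (f i : G ⧸ N))) (h2 : ¬ InvGen G f) :
    ∃ M : Subgroup G, IsCompl M N ∧ ∀ i, f i ∈ Meets M := by
  unfold InvGen at h2
  push Not at h2
  obtain ⟨c, hc⟩ := h2
  set M := Subgroup.closure (Set.range fun i => c i * f i * (c i)⁻¹) with hM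
  have hMN : M ⊔ N = ⊤ := by
    have h3 := h1 (fun i => (c i : G ⧸ N))
    have h4 : M.map (QuotientGroup.mk' N) = ⊤ := by
      rw [hM, MonoidHom.map_closure, ← h3]
      congr 1
      ext x
      simp
    have h5 := congrArg (Subgroup.comap (QuotientGroup.mk' N)) h4
    rw [Subgroup.comap_map_eq, QuotientGroup.ker_mk', Subgroup.comap_top] at h5
    exact h5
  refine ⟨M, IsCompl.of_eq ?_ hMN, fun i => ⟨c i, Subgroup.subset_closure ⟨i, rfl⟩⟩⟩
  have hnorm : (M ⊓ N).Normal := by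
    constructor
    intro n hn g
    have hg : g ∈ M ⊔ N := by rw [hMN]; trivial
    obtain ⟨y, hy, z, hz, rfl⟩ := Subgroup.mem_sup_of_normal_right.1 hg
    have : y * z * n * (y * z)⁻¹ = y * n * y⁻¹ := by
      rw [mul_assoc y z n, hab z hz n hn.2]; group
    rw [this]
    exact ⟨M.mul_mem (M.mul_mem hy hn.1) (M.inv_mem hy), hN.1.conj_mem n hn.2 y⟩
  by_contra hne
  have h6 := hN.2.2 _ hnorm hne inf_le_right
  apply hc
  rw [← hMN]
  symm
  exact sup_eq_left.2 (by rw [← h6]; exact inf_le_left)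

/-- The set of tuples that invariably generate modulo `N` but do not invariably generate. -/
def waitSet {G : Type} [Group G] (N : Subgroup G) [N.Normal] (k : ℕ) : Set (Fin k → G) :=
  {f | InvGen (G ⧸ N) (fun i => (f i : G ⧸ N)) ∧ ¬ InvGen G f}

theorem failP_quot {G : Type} [Group G] [Finite G] (N : Subgroup G) [N.Normal] (k : ℕ) :
    failP (G ⧸ N) k = pr {f : Fin k → G | ¬ InvGen (G ⧸ N) (fun i => (f i : G ⧸ N))} := by
  rw [failP_eq, ← pr_quot]; rfl

theorem failP_split {G : Type} [Group G] [Finite G] (N : Subgroup G) [N.Normal] (k : ℕ) :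
    failP G k = failP (G ⧸ N) k + pr (waitSet N k) := by
  rw [failP_quot, failP_eq, ← pr_disj]
  · congr 1
    ext f
    simp only [waitSet, Set.mem_ofPred_eq, Set.mem_union]
    have := invGen_map (QuotientGroup.mk' N) (QuotientGroup.mk'_surjective N) (f := f)
    simp only [QuotientGroup.mk'_apply] at this
    tauto
  · rw [Set.disjoint_left]
    intro f h1 h2
    exact h1 h2.1

/-- If `N` has no complement then it may be factored out. -/
theorem failP_frattini {G : Type} [Group G] [Finite G] {N : Subgroup G} [N.Normal]
    (hN : IsMinimalNormal G N) (hab : ∀ x ∈ N, ∀ y ∈ N, x * y = y * x)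
    (hno : ¬ ∃ M : Subgroup G, IsCompl M N) (k : ℕ) : failP G k = failP (G ⧸ N) k := by
  rw [failP_split N]
  have : waitSet N k = ∅ := by
    rw [Set.eq_empty_iff_forall_notMem]
    rintro f ⟨h1, h2⟩
    obtain ⟨M, hM, -⟩ := exists_compl hN hab h1 h2
    exact hno ⟨M, hM⟩
  rw [this]
  simp [pr]

theorem wait_step {G : Type} [Group G] [Finite G] {N : Subgroup G} [N.Normal]
    (hN : IsMinimalNormal G N) (hab : ∀ x ∈ N, ∀ y ∈ N, x * y = y * x) (u : ℝ)
    (hu : ∀ M : Subgroup G, IsCompl M N → ((Meets M).ncard : ℝ) ≤ u * Nat.card G)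
    (huniq : ∀ (k : ℕ) (f : Fin k → G), InvGen (G ⧸ N) (fun i => (f i : G ⧸ N)) →
      ∀ M₁ M₂ : Subgroup G, IsCompl M₁ N → IsCompl M₂ N → (∀ i, f i ∈ Meets M₁) →
        (∀ i, f i ∈ Meets M₂) → Meets M₁ = Meets M₂) (k : ℕ) :
    pr (waitSet N (k + 1)) ≤ u * pr (waitSet N k) + (failP (G ⧸ N) k - failP (G ⧸ N) (k + 1)) := by
  classical
  set A : Set (Fin (k + 1) → G) := {f | f ∈ waitSet N (k+1) ∧ Fin.tail f ∈ waitSet N k} with hA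
  set B : Set (Fin (k + 1) → G) := {f | InvGen (G ⧸ N) (fun i => (f i : G ⧸ N)) ∧
    ¬ InvGen (G ⧸ N) (fun i => (Fin.tail f i : G ⧸ N))} with hB
  have h1 : pr (waitSet N (k + 1)) ≤ pr A + pr B := by
    refine le_trans (pr_mono ?_) (pr_union_le A B)
    intro f hf
    by_cases h : InvGen (G ⧸ N) (fun i => (Fin.tail f i : G ⧸ N))
    · left
      exact ⟨hf, h, fun h' => hf.2 (invGen_of_tail h')⟩
    · right
      exact ⟨hf.1, h⟩
  have h2 : pr A ≤ u * pr (waitSet N k) := by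
    have key : ∀ t ∈ waitSet N k, ∃ M : Subgroup G, IsCompl M N ∧ ∀ i, t i ∈ Meets M :=
      fun t ht => exists_compl hN hab ht.1 ht.2
    apply pr_succ_le A (waitSet N k)
      (fun t => if h : t ∈ waitSet N k then Meets (key t h).choose else ∅)
    · intro t ht
      simp only [ht, dif_pos]
      exact hu _ (key t ht).choose_spec.1
    · intro f hf
      refine ⟨hf.2, ?_⟩
      simp only [hf.2, dif_pos]
      obtain ⟨M, hM, hM2⟩ := exists_compl hN hab hf.1.1 hf.1.2
      have hs := (key _ hf.2).choose_spec
      rw [huniq k (Fin.tail f) hf.2.1 _ M hs.1 hM hs.2 (fun i => hM2 i.succ)]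
      exact hM2 0
  have h3 : pr B ≤ failP (G ⧸ N) k - failP (G ⧸ N) (k + 1) := by
    have h4 : pr {f : Fin (k+1) → G | ¬ InvGen (G ⧸ N) (fun i => (Fin.tail f i : G ⧸ N))}
        ≤ 1 * failP (G ⧸ N) k := by
      rw [failP_quot]
      apply pr_succ_le _ _ (fun _ => Set.univ)
      · intro t _
        simp
      · intro f hf
        exact ⟨hf, trivial⟩
    have h5 := pr_disj (S := B)
      (T := {f : Fin (k+1) → G | ¬ InvGen (G ⧸ N) (fun i => (f i : G ⧸ N))})
      (by rw [Set.disjoint_left]; intro f h h'; exact h' h.1)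
    have h6 : pr (B ∪ {f : Fin (k+1) → G | ¬ InvGen (G ⧸ N) (fun i => (f i : G ⧸ N))}) ≤
        pr {f : Fin (k+1) → G | ¬ InvGen (G ⧸ N) (fun i => (Fin.tail f i : G ⧸ N))} := by
      apply pr_mono
      rintro f (h | h)
      · exact h.2
      · intro h'
        apply h
        exact invGen_of_tail (f := fun i => (f i : G ⧸ N)) h'
    rw [h5, ← failP_quot] at h6
    linarith
  linarith

/-- Main recursive estimate. -/
theorem cheb_step {G : Type} [Group G] [Finite G] {N : Subgroup G} [N.Normal]
    (hN : IsMinimalNormal G N) (hab : ∀ x ∈ N, ∀ y ∈ N, x * y = y * x) (u : ℝ) (hu1 : u < 1)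
    (hu : ∀ M : Subgroup G, IsCompl M N → ((Meets M).ncard : ℝ) ≤ u * Nat.card G)
    (huniq : ∀ (k : ℕ) (f : Fin k → G), InvGen (G ⧸ N) (fun i => (f i : G ⧸ N)) →
      ∀ M₁ M₂ : Subgroup G, IsCompl M₁ N → IsCompl M₂ N → (∀ i, f i ∈ Meets M₁) →
        (∀ i, f i ∈ Meets M₂) → Meets M₁ = Meets M₂)
    (hs : Summable (failP (G ⧸ N))) :
    Summable (failP G) ∧ cheb G ≤ cheb (G ⧸ N) + 1 / (1 - u) := by
  have hb : ∀ n, (1 - u) * ∑ k ∈ Finset.range n, pr (waitSet N k) + pr (waitSet N n) ≤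
      1 - failP (G ⧸ N) n := by
    intro n
    induction n with
    | zero =>
      have h1 := failP_split N 0
      have h2 := failP_le_one (G := G) 0
      simp only [Finset.range_zero, Finset.sum_empty]
      linarith
    | succ n ih =>
      have h1 := wait_step hN hab u hu huniq n
      rw [Finset.sum_range_succ]
      linarith
  have hb2 : ∀ n, ∑ k ∈ Finset.range n, pr (waitSet N k) ≤ 1 / (1 - u) := by
    intro n
    rw [le_div_iff₀ (by linarith)]
    have := hb n
    have h3 := pr_nonneg (waitSet N n)
    have := failP_nonneg (G := G ⧸ N) n
    linarith
  have hs2 : Summable (fun k => pr (waitSet N k)) :=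
    summable_of_sum_range_le (fun k => pr_nonneg _) hb2
  have heq : failP G = fun k => failP (G ⧸ N) k + pr (waitSet N k) := by
    funext k; exact failP_split N k
  refine ⟨by rw [heq]; exact hs.add hs2, ?_⟩
  change ∑' k, failP G k ≤ ∑' k, failP (G ⧸ N) k + _
  rw [heq, hs.tsum_add hs2]
  gcongr
  exact hs2.tsum_le_of_sum_range_le hb2

/-- Recursive estimate when there is only one conjugacy class of complements. -/
theorem cheb_step_one {G : Type} [Group G] [Finite G] {N : Subgroup G} [N.Normal]
    (hN : IsMinimalNormal G N) (hab : ∀ x ∈ N, ∀ y ∈ N, x * y = y * x) (hntop : N ≠ ⊤)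
    (u : ℝ) (hu1 : u < 1)
    (hu0 : 0 ≤ u) 
    (hu : ∀ M : Subgroup G, IsCompl M N → ((Meets M).ncard : ℝ) ≤ u * Nat.card G)
    (huniq : ∀ M₁ M₂ : Subgroup G, IsCompl M₁ N → IsCompl M₂ N → Meets M₁ = Meets M₂)
    (hs : Summable (failP (G ⧸ N))) :
    cheb G ≤ cheb (G ⧸ N) + (1 / (1 - u) - 1) := by
  obtain ⟨W, hW, hWu⟩ : ∃ W : Set G, (∀ M : Subgroup G, IsCompl M N → Meets M = W) ∧
      (W.ncard : ℝ) ≤ u * Nat.card G := by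
    by_cases h : ∃ M : Subgroup G, IsCompl M N
    · obtain ⟨M, hM⟩ := h
      exact ⟨Meets M, fun M' hM' => huniq _ _ hM' hM, hu M hM⟩
    · push Not at h
      refine ⟨∅, fun M hM => absurd hM (h M), ?_⟩
      simp only [Set.ncard_empty, Nat.cast_zero]
      positivity
  have hk : ∀ k, pr {f : Fin k → G | ∀ i, f i ∈ W} ≤ u ^ k := by
    intro k
    induction k with
    | zero => simpa using (pr_mono (Set.subset_univ _)).trans_eq (pr_univ (G := G) (k := 0))
    | succ k ih =>
      have := pr_succ_le {f : Fin (k + 1) → G | ∀ i, f i ∈ W} {f : Fin k → G | ∀ i, f i ∈ W}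
        (fun _ => W) u (fun _ _ => hWu) (fun f hf => ⟨fun i => hf i.succ, hf 0⟩)
      rw [pow_succ, mul_comm]
      exact this.trans (by gcongr)
  have hk2 : ∀ k, pr (waitSet N k) ≤ if k = 0 then 0 else u ^ k := by
    intro k
    split_ifs with h
    · subst h
      have : waitSet N 0 = ∅ := by
        rw [Set.eq_empty_iff_forall_notMem]
        rintro f ⟨h1, h2⟩
        have := h1 (fun _ => 1)
        rw [Set.range_eq_empty, Subgroup.closure_empty] at this
        apply hntop
        rw [eq_top_iff]
        intro g _
        have h4 : (g : G ⧸ N) ∈ (⊤ : Subgroup (G ⧸ N)) := trivial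
        rw [← this, Subgroup.mem_bot] at h4
        exact (QuotientGroup.eq_one_iff g).1 h4
      rw [this]; simp [pr]
    · refine (pr_mono ?_).trans (hk k)
      rintro f ⟨h1, h2⟩
      obtain ⟨M, hM, h3⟩ := exists_compl hN hab h1 h2
      rw [hW M hM] at h3
      exact h3
  have hg := hasSum_geometric_of_lt_one hu0 hu1
  have hg2 : HasSum (fun k : ℕ => if k = 0 then 0 else u ^ k) (1 / (1 - u) - 1) := by
    have h := hg.update 0 (0:ℝ)
    have e1 : Function.update (fun n : ℕ => u ^ n) 0 (0 : ℝ) =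
        fun k : ℕ => if k = 0 then 0 else u ^ k := by
      funext k; by_cases hk : k = 0 <;> simp [hk, Function.update]
    have e2 : 0 - u ^ 0 + (1 - u)⁻¹ = 1 / (1 - u) - 1 := by
      rw [pow_zero, one_div]; ring
    rw [e1, e2] at h
    exact h
  have hs2 : Summable (fun k => pr (waitSet N k)) :=
    Summable.of_nonneg_of_le (fun k => pr_nonneg _) hk2 hg2.summable
  have heq : failP G = fun k => failP (G ⧸ N) k + pr (waitSet N k) := by
    funext k; exact failP_split N k
  change ∑' k, failP G k ≤ ∑' k, failP (G ⧸ N) k + _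
  rw [heq, hs.tsum_add hs2]
  gcongr
  rw [← hg2.tsum_eq]
  exact hs2.tsum_le_tsum hk2 hg2.summable

end Tuples

section GroupTheory

theorem exists_minNormal (G : Type) [Group G] [Finite G] [Nontrivial G] :
    ∃ N : Subgroup G, IsMinimalNormal G N := by
  obtain ⟨N, hN⟩ := Set.Finite.exists_minimal (s := {N : Subgroup G | N.Normal ∧ N ≠ ⊥})
    (Set.toFinite _) ⟨⊤, inferInstance, top_ne_bot⟩
  refine ⟨N, hN.1.1, hN.1.2, fun M h1 h2 h3 => le_antisymm h3 (hN.2 ⟨h1, h2⟩ h3)⟩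

theorem minNormal_abelian {G : Type} [Group G] (hsol : Group.IsSolvable G) {N : Subgroup G}
    (hN : IsMinimalNormal G N) : ∀ x ∈ N, ∀ y ∈ N, x * y = y * x := by
  have := hN.1
  by_cases h : ⁅N, N⁆ = ⊥
  · rw [Subgroup.commutator_eq_bot_iff_le_centralizer] at h
    intro x hx y hy
    exact (Subgroup.mem_centralizer_iff.1 (h hy)) x hx
  · exfalso
    have h1 : ⁅N, N⁆ = N := hN.2.2 _ inferInstance h (Subgroup.commutator_le_left N N)
    have h2 : ∀ n, N ≤ derivedSeries G n := by
      intro n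
      induction n with
      | zero => simp
      | succ n ih =>
        rw [derivedSeries_succ, ← h1]
        exact Subgroup.commutator_mono ih ih
    obtain ⟨n, hn⟩ := hsol.solvable
    have := h2 n
    rw [hn, le_bot_iff] at this
    exact hN.2.1 this

theorem minNormal_exp {G : Type} [Group G] [Finite G] {N : Subgroup G}
    (hN : IsMinimalNormal G N) (hab : ∀ x ∈ N, ∀ y ∈ N, x * y = y * x) :
    ∃ p : ℕ, p.Prime ∧ p ∣ Nat.card N ∧ ∀ x ∈ N, x ^ p = 1 := by
  have h1 : Nat.card N ≠ 1 := by
    intro h; exact hN.2.1 (Subgroup.card_eq_one.1 h)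
  obtain ⟨p, hp, hdvd⟩ := Nat.exists_prime_and_dvd h1
  have := Fact.mk hp
  obtain ⟨x, hx⟩ := exists_prime_orderOf_dvd_card' p hdvd
  let T : Subgroup G :=
    { carrier := {x | x ∈ N ∧ x ^ p = 1}
      mul_mem' := by
        rintro a b ⟨ha, ha'⟩ ⟨hb, hb'⟩
        refine ⟨N.mul_mem ha hb, ?_⟩
        rw [Commute.mul_pow (hab a ha b hb), ha', hb', one_mul]
      one_mem' := ⟨N.one_mem, one_pow _⟩
      inv_mem' := by
        rintro a ⟨ha, ha'⟩
        exact ⟨N.inv_mem ha, by rw [inv_pow, ha', inv_one]⟩ }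
  have hT : T.Normal := by
    constructor
    rintro n ⟨hn, hn'⟩ g
    refine ⟨hN.1.conj_mem n hn g, ?_⟩
    rw [conj_pow, hn']; group
  have hne : T ≠ ⊥ := by
    intro h
    have h2 : (x : G) ∈ T := ⟨x.2, by
      have := pow_orderOf_eq_one x
      rw [hx] at this
      exact_mod_cast congrArg Subtype.val this⟩
    rw [h, Subgroup.mem_bot] at h2
    have h3 : x = 1 := Subtype.ext h2
    rw [h3, orderOf_one] at hx
    exact hp.one_lt.ne hx
  have h3 := hN.2.2 T hT hne (fun x hx => hx.1)
  refine ⟨p, hp, hdvd, fun x hx => ?_⟩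
  rw [← h3] at hx
  exact hx.2

theorem compl_decomp {G : Type} [Group G] {M N : Subgroup G} [N.Normal] (h : IsCompl M N) (g : G) :
    ∃ m ∈ M, ∃ n ∈ N, m * n = g := by
  apply Subgroup.mem_sup_of_normal_right.1
  rw [h.sup_eq_top]; trivial

theorem compl_one {G : Type} [Group G] {M N : Subgroup G} (h : IsCompl M N) {g : G}
    (h1 : g ∈ M) (h2 : g ∈ N) : g = 1 := by
  have : g ∈ M ⊓ N := ⟨h1, h2⟩
  rw [h.inf_eq_bot] at this
  exact Subgroup.mem_bot.1 this

theorem compl_card {G : Type} [Group G] {M N : Subgroup G} [N.Normal] (h : IsCompl M N) :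
    Nat.card M * Nat.card N = Nat.card G := by
  apply Subgroup.IsComplement'.card_mul_card
  apply Subgroup.isComplement'_of_disjoint_and_mul_eq_univ h.disjoint
  rw [← Subgroup.mul_normal, h.sup_eq_top]; rfl

theorem inf_normal_of_sup {G : Type} [Group G] {N M : Subgroup G} [N.Normal]
    (hab : ∀ x ∈ N, ∀ y ∈ N, x * y = y * x) (hMN : M ⊔ N = ⊤) : (M ⊓ N).Normal := by
  constructor
  intro n hn g
  have hg : g ∈ M ⊔ N := by rw [hMN]; trivial
  obtain ⟨y, hy, z, hz, rfl⟩ := Subgroup.mem_sup_of_normal_right.1 hg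
  have : y * z * n * (y * z)⁻¹ = y * n * y⁻¹ := by
    rw [mul_assoc y z n, hab z hz n hn.2]; group
  rw [this]
  exact ⟨M.mul_mem (M.mul_mem hy hn.1) (M.inv_mem hy), ‹N.Normal›.conj_mem n hn.2 y⟩

theorem compl_maximal {G : Type} [Group G] {N M X : Subgroup G} [N.Normal]
    (hN : IsMinimalNormal G N) (hab : ∀ x ∈ N, ∀ y ∈ N, x * y = y * x) (h : IsCompl M N)
    (hX : M < X) : X = ⊤ := by
  have h1 : X ⊔ N = ⊤ := by
    rw [eq_top_iff, ← h.sup_eq_top]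
    exact sup_le_sup_right hX.le N
  have h2 := inf_normal_of_sup hab h1
  have h3 : X ⊓ N ≠ ⊥ := by
    intro h3
    obtain ⟨x, hx, hxM⟩ := SetLike.exists_of_lt hX
    obtain ⟨m, hm, n, hn, rfl⟩ := compl_decomp h x
    have : n ∈ X ⊓ N := ⟨by simpa using X.mul_mem (X.inv_mem (hX.le hm)) hx, hn⟩
    rw [h3, Subgroup.mem_bot] at this
    rw [this, mul_one] at hxM
    exact hxM hm
  have h4 := hN.2.2 _ h2 h3 inf_le_right
  rw [← h1, left_eq_sup, ← h4]
  exact inf_le_left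

/-- The part of a complement centralizing `N` is normal. -/
theorem core_normal {G : Type} [Group G] {N M : Subgroup G} [N.Normal] (h : IsCompl M N) :
    (M ⊓ Subgroup.centralizer (N : Set G)).Normal := by
  constructor
  intro k hk g
  obtain ⟨m, hm, n, hn, rfl⟩ := compl_decomp h g
  have h1 : n * k = k * n := (Subgroup.mem_centralizer_iff.1 hk.2) n hn
  have h2 : m * n * k * (m * n)⁻¹ = m * k * m⁻¹ := by
    rw [mul_assoc m n k, h1]; group
  rw [h2]
  refine ⟨M.mul_mem (M.mul_mem hm hk.1) (M.inv_mem hm), ?_⟩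
  have : (Subgroup.centralizer (N : Set G)).Normal := inferInstance
  exact this.conj_mem k hk.2 m

theorem le_cent {G : Type} [Group G] {N : Subgroup G}
    (hab : ∀ x ∈ N, ∀ y ∈ N, x * y = y * x) : N ≤ Subgroup.centralizer (N : Set G) := by
  intro x hx
  rw [Subgroup.mem_centralizer_iff]
  intro y hy
  exact hab y hy x hx

theorem exists_above {G : Type} [Group G] [Finite G] (hsol : Group.IsSolvable G) (C : Subgroup G)
    [C.Normal] (hC : C ≠ ⊤) :
    ∃ L : Subgroup G, L.Normal ∧ C < L ∧ ∃ r : ℕ, r.Prime ∧ ∀ x ∈ L, x ^ r ∈ C := by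
  have : Nontrivial (G ⧸ C) := QuotientGroup.nontrivial_iff.2 hC
  obtain ⟨A, hA⟩ := exists_minNormal (G ⧸ C)
  have hsQ : Group.IsSolvable (G ⧸ C) := inferInstance
  obtain ⟨r, hr, -, hr2⟩ := minNormal_exp hA (minNormal_abelian hsQ hA)
  have := hA.1
  refine ⟨A.comap (QuotientGroup.mk' C), inferInstance, ?_, r, hr, ?_⟩
  · refine lt_of_le_of_ne ?_ ?_
    · intro x hx
      rw [Subgroup.mem_comap, QuotientGroup.mk'_apply, (QuotientGroup.eq_one_iff x).2 hx]
      exact A.one_mem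
    · intro h
      apply hA.2.1
      rw [eq_bot_iff]
      intro y hy
      obtain ⟨x, rfl⟩ := QuotientGroup.mk'_surjective C y
      have hx : x ∈ A.comap (QuotientGroup.mk' C) := hy
      rw [← h] at hx
      exact Subgroup.mem_bot.2 ((QuotientGroup.eq_one_iff x).2 hx)
  · intro x hx
    have := hr2 _ (Subgroup.mem_comap.1 hx)
    rw [← map_pow] at this
    exact (QuotientGroup.eq_one_iff _).1 this

theorem isPGroup_of_exp {G : Type} [Group G] {p : ℕ} (h : ∀ x : G, x ^ p = 1) : IsPGroup p G :=
  fun x => ⟨1, by rw [pow_one, h]⟩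

/-- A normal subgroup acting as a `p`-group on the minimal normal `p`-subgroup `N` centralizes
it. -/
theorem le_cent_of_pgroup {G : Type} [Group G] [Finite G] {N : Subgroup G} [N.Normal]
    (hN : IsMinimalNormal G N) {p : ℕ} (hp : p.Prime) (hpd : p ∣ Nat.card N)
    {L : Subgroup G} (hL : L.Normal)
    (hLC : ∀ x ∈ L, x ^ p ∈ Subgroup.centralizer (N : Set G)) :
    L ≤ Subgroup.centralizer (N : Set G) := by
  have := Fact.mk hp
  let φ : G →* MulAut N := MulAut.conjNormal
  have hP : IsPGroup p (L.map φ) := by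
    apply isPGroup_of_exp
    rintro ⟨σ, x, hx, rfl⟩
    ext n
    have h1 := (Subgroup.mem_centralizer_iff.1 (hLC x hx)) n n.2
    simp only [Subgroup.coe_pow, ← map_pow, φ, MulAut.conjNormal_apply]
    rw [← h1]; simp
  have h1 := hP.card_modEq_card_fixedPoints N
  have h2 : p ∣ Nat.card (MulAction.fixedPoints (L.map φ) N) :=
    (Nat.modEq_zero_iff_dvd.1 (h1.symm.trans (Nat.modEq_zero_iff_dvd.2 hpd)))
  have hone : (1 : N) ∈ MulAction.fixedPoints (L.map φ) N := by
    rintro ⟨σ, x, hx, rfl⟩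
    exact map_one (φ x)
  have h3 : 1 < Nat.card (MulAction.fixedPoints (L.map φ) N) := by
    have : Nonempty (MulAction.fixedPoints (L.map φ) N) := ⟨⟨1, hone⟩⟩
    exact lt_of_lt_of_le hp.one_lt (Nat.le_of_dvd Nat.card_pos h2)
  rw [Finite.one_lt_card_iff_nontrivial] at h3
  obtain ⟨⟨n, hn⟩, hne⟩ := exists_ne (⟨1, hone⟩ : MulAction.fixedPoints (L.map φ) N)
  have hn1 : n ≠ 1 := fun h => hne (Subtype.ext h)
  have hnL : (n : G) ∈ N ⊓ Subgroup.centralizer (L : Set G) := by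
    refine ⟨n.2, Subgroup.mem_centralizer_iff.2 fun x hx => ?_⟩
    have h4 : φ x n = n := hn ⟨φ x, x, hx, rfl⟩
    have h5 := congrArg Subtype.val h4
    simp only [φ, MulAut.conjNormal_apply] at h5
    exact mul_inv_eq_iff_eq_mul.1 h5
  have h6 : N ⊓ Subgroup.centralizer (L : Set G) = N := by
    apply hN.2.2 _ inferInstance _ inf_le_left
    intro h
    rw [h, Subgroup.mem_bot] at hnL
    exact hn1 (Subtype.ext hnL)
  intro x hx
  rw [Subgroup.mem_centralizer_iff]
  intro y hy
  have hy2 : y ∈ N ⊓ Subgroup.centralizer (L : Set G) := by rw [h6]; exact hy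
  exact ((Subgroup.mem_centralizer_iff.1 hy2.2) x hx).symm

theorem meets_conj {G : Type} [Group G] {M M' : Subgroup G} (g : G)
    (h : ∀ x, x ∈ M' ↔ g⁻¹ * x * g ∈ M) : Meets M' = Meets M := by
  ext y
  constructor
  · rintro ⟨x, hx⟩
    refine ⟨g⁻¹ * x, ?_⟩
    convert (h _).1 hx using 1
    group
  · rintro ⟨x, hx⟩
    refine ⟨g * x, ?_⟩
    rw [h]
    convert hx using 1
    group

/-- Two complements of `N` with the same core are conjugate. -/
theorem meets_eq_of_core_eq {G : Type} [Group G] [Finite G] (hsol : Group.IsSolvable G)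
    {N : Subgroup G} [N.Normal]
    (hN : IsMinimalNormal G N) {M₁ M₂ : Subgroup G} (h₁ : IsCompl M₁ N) (h₂ : IsCompl M₂ N)
    (hK : M₁ ⊓ Subgroup.centralizer (N : Set G) = M₂ ⊓ Subgroup.centralizer (N : Set G)) :
    Meets M₁ = Meets M₂ := by
  have hab := minNormal_abelian hsol hN
  set C := Subgroup.centralizer (N : Set G) with hC
  by_cases hCt : C = ⊤
  · rw [hCt, inf_top_eq, inf_top_eq] at hK
    rw [hK]
  obtain ⟨p, hp, hpd, hpe⟩ := minNormal_exp hN hab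
  obtain ⟨L, hL, hCL, r, hr, hrL⟩ := exists_above hsol C hCt
  have := Fact.mk hp
  have := Fact.mk hr
  have hrp : ¬ r ∣ Nat.card N := by
    intro hd
    have hNp : IsPGroup p N := isPGroup_of_exp (fun x => Subtype.ext (hpe x x.2))
    obtain ⟨n, hn⟩ := IsPGroup.iff_card.1 hNp
    rw [hn] at hd
    have h1 := (Nat.prime_dvd_prime_iff_eq hr hp).1 (hr.dvd_of_dvd_pow hd)
    subst h1
    exact absurd (le_cent_of_pgroup hN hr hpd hL hrL) (not_le_of_gt hCL)
  have hKn := core_normal h₁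
  rw [← hC] at hKn
  have hNL : N ≤ L := (le_cent hab).trans hCL.le
  -- a fixed point
  let φ := MulAction.toPermHom G (G ⧸ M₁)
  have hP : IsPGroup r ((M₂ ⊓ L).map φ) := by
    apply isPGroup_of_exp
    rintro ⟨σ, x, hx, rfl⟩
    have hxr : x ^ r ∈ M₁ ⊓ C := by
      rw [hK]; exact ⟨M₂.pow_mem hx.1 r, hrL x hx.2⟩
    ext q
    induction q using QuotientGroup.induction_on with
    | H g =>
      simp only [Subgroup.coe_pow, ← map_pow, φ]
      change (((x ^ r * g : G)) : G ⧸ M₁) = (g : G ⧸ M₁)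
      rw [eq_comm, QuotientGroup.eq]
      have := hKn.conj_mem _ hxr g⁻¹
      simpa [mul_assoc] using this.1
  have h1 := hP.card_modEq_card_fixedPoints (G ⧸ M₁)
  have hcard : Nat.card (G ⧸ M₁) = Nat.card N := by
    have h2 := Subgroup.card_eq_card_quotient_mul_card_subgroup M₁
    have h3 := compl_card h₁
    have h4 : 0 < Nat.card M₁ := Nat.card_pos
    rw [← h3, mul_comm] at h2
    exact (Nat.eq_of_mul_eq_mul_right h4 h2).symm
  rw [hcard] at h1
  have h2 : Nonempty (MulAction.fixedPoints ((M₂ ⊓ L).map φ) (G ⧸ M₁)) := by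
    by_contra hne
    rw [not_nonempty_iff] at hne
    have h0 : Nat.card (MulAction.fixedPoints ((M₂ ⊓ L).map φ) (G ⧸ M₁)) = 0 := Nat.card_of_isEmpty
    rw [h0] at h1
    exact hrp (Nat.modEq_zero_iff_dvd.1 h1)
  obtain ⟨⟨q, hq⟩⟩ := h2
  obtain ⟨g, rfl⟩ := QuotientGroup.mk_surjective q
  have hg : ∀ x ∈ M₂ ⊓ L, g⁻¹ * x * g ∈ M₁ := by
    intro x hx
    have h3 : φ x (g : G ⧸ M₁) = (g : G ⧸ M₁) := hq ⟨φ x, x, hx, rfl⟩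
    change (((x * g : G)) : G ⧸ M₁) = (g : G ⧸ M₁) at h3
    rw [eq_comm, QuotientGroup.eq] at h3
    simpa [mul_assoc] using h3
  -- the conjugate
  let M₃ := M₁.comap (MulAut.conj g⁻¹).toMonoidHom
  have hM₃ : ∀ x, x ∈ M₃ ↔ g⁻¹ * x * g ∈ M₁ := by
    intro x
    simp [M₃]
  rw [← meets_conj g hM₃]
  have h₃ : IsCompl M₃ N := by
    apply IsCompl.of_eq
    · rw [eq_bot_iff]
      rintro x ⟨hx, hxN⟩
      have h4 := (hM₃ x).1 hx
      have h5 : g⁻¹ * x * g ∈ N := by simpa using hN.1.conj_mem x hxN g⁻¹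
      have h6 := compl_one h₁ h4 h5
      rw [Subgroup.mem_bot]
      have : x = g * (g⁻¹ * x * g) * g⁻¹ := by group
      rw [this, h6]; group
    · rw [eq_top_iff]
      intro x _
      obtain ⟨m, hm, n, hn, hmn⟩ := compl_decomp h₁ (g⁻¹ * x * g)
      apply Subgroup.mem_sup_of_normal_right.2
      refine ⟨g * m * g⁻¹, (hM₃ _).2 (by convert hm using 1; group), g * n * g⁻¹,
        hN.1.conj_mem n hn g, ?_⟩
      have : g * m * g⁻¹ * (g * n * g⁻¹) = g * (m * n) * g⁻¹ := by group
      rw [this, hmn]; group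
  have hR : M₂ ⊓ L = M₃ ⊓ L := by
    apply le_antisymm
    · intro x hx
      exact ⟨(hM₃ x).2 (hg x hx), hx.2⟩
    · rintro y ⟨hy, hyL⟩
      obtain ⟨m, hm, n, hn, rfl⟩ := compl_decomp h₂ y
      have hmL : m ∈ L := by
        have := L.mul_mem hyL (L.inv_mem (hNL hn))
        simpa using this
      have hm3 : m ∈ M₃ := (hM₃ m).2 (hg m ⟨hm, hmL⟩)
      have hn3 : n ∈ M₃ := by simpa using M₃.mul_mem (M₃.inv_mem hm3) hy
      have := compl_one h₃ hn3 hn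
      subst this
      simpa using ⟨hm, hmL⟩
  by_cases hM23 : M₂ = M₃
  · rw [hM23]
  exfalso
  have hsup : M₂ ⊔ M₃ = ⊤ := by
    apply compl_maximal hN hab h₂
    refine lt_of_le_of_ne le_sup_left ?_
    intro h
    have h4 : M₃ ≤ M₂ := by rw [h]; exact le_sup_right
    have h5 := compl_maximal hN hab h₃ (lt_of_le_of_ne h4 (Ne.symm hM23))
    have h6 := h₂.inf_eq_bot
    rw [h5, top_inf_eq] at h6
    exact hN.2.1 h6
  have hRn : (M₂ ⊓ L).Normal := by
    rw [← Subgroup.normalizer_eq_top_iff, eq_top_iff, ← hsup]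
    have aux : ∀ M : Subgroup G, M ≤ Subgroup.normalizer ((M ⊓ L : Subgroup G) : Set G) := by
      intro M x hx
      rw [Subgroup.mem_normalizer_iff]
      intro y
      constructor
      · rintro ⟨a, b⟩
        exact ⟨M.mul_mem (M.mul_mem hx a) (M.inv_mem hx), hL.conj_mem y b x⟩
      · rintro ⟨a, b⟩
        have a' := M.mul_mem (M.mul_mem (M.inv_mem hx) a) hx
        have b' := hL.conj_mem _ b x⁻¹
        have e1 : x⁻¹ * (x * y * x⁻¹) * x = y := by group
        have e2 : x⁻¹ * (x * y * x⁻¹) * x⁻¹⁻¹ = y := by group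
        rw [e1] at a'
        rw [e2] at b'
        exact ⟨a', b'⟩
    apply sup_le (aux M₂)
    rw [hR]; exact aux M₃
  have hRC : M₂ ⊓ L ≤ C := by
    intro y hy
    rw [hC, Subgroup.mem_centralizer_iff]
    intro n hn
    have h4 : n * y * n⁻¹ * y⁻¹ ∈ M₂ ⊓ L :=
      (M₂ ⊓ L).mul_mem (hRn.conj_mem y hy n) ((M₂ ⊓ L).inv_mem hy)
    have h5 : n * y * n⁻¹ * y⁻¹ ∈ N := by
      have := N.mul_mem hn (hN.1.conj_mem n⁻¹ (N.inv_mem hn) y)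
      simpa [mul_assoc] using this
    have h6 := compl_one h₂ h4.1 h5
    rw [mul_inv_eq_one, mul_inv_eq_iff_eq_mul] at h6
    exact h6
  apply absurd hCL (not_lt_of_ge _)
  intro x hx
  obtain ⟨m, hm, n, hn, rfl⟩ := compl_decomp h₂ x
  have hmL : m ∈ L := by
    have := L.mul_mem hx (L.inv_mem (hNL hn))
    simpa using this
  exact C.mul_mem (hRC ⟨hm, hmL⟩) (le_cent hab hn)

end GroupTheory

section GroupTheory2

variable {G : Type} [Group G]

theorem core_split {N M : Subgroup G} [N.Normal] (hab : ∀ x ∈ N, ∀ y ∈ N, x * y = y * x)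
    (h : IsCompl M N) {c : G} (hc : c ∈ Subgroup.centralizer (N : Set G)) :
    ∃ k ∈ M ⊓ Subgroup.centralizer (N : Set G), ∃ n ∈ N, k * n = c := by
  obtain ⟨m, hm, n, hn, rfl⟩ := compl_decomp h c
  refine ⟨m, ⟨hm, ?_⟩, n, hn, rfl⟩
  have := Subgroup.mul_mem _ hc (Subgroup.inv_mem _ (le_cent hab hn))
  simpa using this

theorem le_sup_cores {N M₁ M₂ : Subgroup G} [N.Normal] (hN : IsMinimalNormal G N)
    (hab : ∀ x ∈ N, ∀ y ∈ N, x * y = y * x) (h₁ : IsCompl M₁ N) (h₂ : IsCompl M₂ N)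
    (hne : ¬ (M₁ ⊓ Subgroup.centralizer (N : Set G) ≤ M₂ ⊓ Subgroup.centralizer (N : Set G))) :
    N ≤ (M₁ ⊓ Subgroup.centralizer (N : Set G)) ⊔ (M₂ ⊓ Subgroup.centralizer (N : Set G)) := by
  have k₁ := core_normal h₁
  have k₂ := core_normal h₂
  obtain ⟨k, hk, hk2⟩ := SetLike.not_le_iff_exists.1 hne
  obtain ⟨l, hl, n, hn, hln⟩ := core_split hab h₂ hk.2
  set K := (M₁ ⊓ Subgroup.centralizer (N : Set G)) ⊔ (M₂ ⊓ Subgroup.centralizer (N : Set G))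
    with hK
  have hnK : n ∈ K ⊓ N := by
    refine ⟨?_, hn⟩
    have h3 : n = l⁻¹ * k := by rw [← hln]; group
    rw [h3]
    exact K.mul_mem (K.inv_mem (Subgroup.mem_sup_right hl)) (Subgroup.mem_sup_left hk)
  have hKn : K.Normal := by rw [hK]; infer_instance
  have := hN.2.2 (K ⊓ N) inferInstance (by
    intro h
    rw [h, Subgroup.mem_bot] at hnK
    rw [hnK, mul_one] at hln
    rw [← hln] at hk2
    exact hk2 hl) inf_le_right
  rw [← this]
  exact inf_le_left

theorem inf_sup_ne_top {N M₁ M₂ : Subgroup G} [N.Normal] (h₁ : IsCompl M₁ N)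
    (h : (M₁ ⊓ M₂) ⊔ N = ⊤) : M₁ ≤ M₂ := by
  intro m hm
  have : m ∈ (M₁ ⊓ M₂) ⊔ N := by rw [h]; trivial
  obtain ⟨a, ha, n, hn, rfl⟩ := Subgroup.mem_sup_of_normal_right.1 this
  have h1 : n ∈ M₁ := by simpa using M₁.mul_mem (M₁.inv_mem ha.1) hm
  rw [compl_one h₁ h1 hn, mul_one]
  exact ha.2

theorem huniq_lemma [Finite G] (hsol : Group.IsSolvable G) {N : Subgroup G} [N.Normal]
    (hN : IsMinimalNormal G N) (k : ℕ) (f : Fin k → G)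
    (hf : InvGen (G ⧸ N) (fun i => (f i : G ⧸ N))) (M₁ M₂ : Subgroup G)
    (h₁ : IsCompl M₁ N) (h₂ : IsCompl M₂ N) (f₁ : ∀ i, f i ∈ Meets M₁) (f₂ : ∀ i, f i ∈ Meets M₂) :
    Meets M₁ = Meets M₂ := by
  have hab := minNormal_abelian hsol hN
  by_cases hK : M₁ ⊓ Subgroup.centralizer (N : Set G) = M₂ ⊓ Subgroup.centralizer (N : Set G)
  · exact meets_eq_of_core_eq hsol hN h₁ h₂ hK
  exfalso
  have k₁ := core_normal h₁
  have k₂ := core_normal h₂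
  have hle : N ≤ (M₂ ⊓ Subgroup.centralizer (N : Set G)) ⊔
      (M₁ ⊓ Subgroup.centralizer (N : Set G)) := by
    by_cases h : M₁ ⊓ Subgroup.centralizer (N : Set G) ≤ M₂ ⊓ Subgroup.centralizer (N : Set G)
    · exact le_sup_cores hN hab h₂ h₁ (fun h' => hK (le_antisymm h h'))
    · rw [sup_comm]; exact le_sup_cores hN hab h₁ h₂ h
  have hmeet : ∀ i, f i ∈ Meets (M₁ ⊓ M₂) := by
    intro i
    obtain ⟨x, hx⟩ := f₁ i
    obtain ⟨y, hy⟩ := f₂ i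
    obtain ⟨m, hm, n, hn, hmn⟩ := compl_decomp h₂ (y * x⁻¹)
    obtain ⟨b, hb, a, ha, hab'⟩ := Subgroup.mem_sup_of_normal_right.1 (hle hn)
    refine ⟨a * x, ?_, ?_⟩
    · have := M₁.mul_mem (M₁.mul_mem ha.1 hx) (M₁.inv_mem ha.1)
      change a * x * f i * (a * x)⁻¹ ∈ M₁
      convert this using 1; group
    · have hmb : m * b ∈ M₂ := M₂.mul_mem hm hb.1
      have := M₂.mul_mem (M₂.mul_mem (M₂.inv_mem hmb) hy) hmb
      have e : a * x = (m * b)⁻¹ * y := by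
        have : y = m * n * x := by rw [hmn]; group
        rw [this, ← hab']; group
      change a * x * f i * (a * x)⁻¹ ∈ M₂
      convert this using 1
      rw [e]; group
  refine not_invGen_of_meets (M := (M₁ ⊓ M₂).map (QuotientGroup.mk' N)) ?_ ?_ hf
  · intro h
    have h3 : (M₁ ⊓ M₂) ⊔ N = ⊤ := by
      have := congrArg (Subgroup.comap (QuotientGroup.mk' N)) h
      rw [Subgroup.comap_map_eq, QuotientGroup.ker_mk', Subgroup.comap_top] at this
      exact this
    have h4 := inf_sup_ne_top h₁ h3
    have h5 := inf_sup_ne_top (M₂ := M₁) h₂ (by rwa [inf_comm])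
    exact hK (by rw [le_antisymm h4 h5])
  · intro i
    obtain ⟨x, hx⟩ := hmeet i
    exact ⟨(x : G ⧸ N), x * f i * x⁻¹, hx, rfl⟩

theorem coprime_core [Finite G] {N : Subgroup G} [N.Normal]
    (hab : ∀ x ∈ N, ∀ y ∈ N, x * y = y * x)
    (hc : Nat.Coprime (Nat.card N) (Nat.card (G ⧸ N))) {M₁ M₂ : Subgroup G}
    (h₁ : IsCompl M₁ N) (h₂ : IsCompl M₂ N) :
    M₁ ⊓ Subgroup.centralizer (N : Set G) ≤ M₂ ⊓ Subgroup.centralizer (N : Set G) := by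
  intro k hk
  obtain ⟨l, hl, n, hn, hln⟩ := core_split hab h₂ hk.2
  have hpow : ∀ x : G, x ^ Nat.card (G ⧸ N) ∈ N := by
    intro x
    rw [← QuotientGroup.eq_one_iff, QuotientGroup.mk_pow, pow_card_eq_one']
  have e1 := compl_one h₁ (M₁.pow_mem hk.1 _) (hpow k)
  have e2 := compl_one h₂ (M₂.pow_mem hl.1 _) (hpow l)
  have hcomm : Commute l n := ((Subgroup.mem_centralizer_iff.1 hl.2) n hn).symm
  rw [← hln, hcomm.mul_pow, e2, one_mul] at e1
  have e3 : n ^ Nat.card N = 1 := by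
    have := pow_card_eq_one' (x := (⟨n, hn⟩ : N))
    exact congrArg Subtype.val this
  have : orderOf n ∣ 1 := by
    rw [← hc]
    exact Nat.dvd_gcd (orderOf_dvd_of_pow_eq_one e3) (orderOf_dvd_of_pow_eq_one e1)
  have hn1 : n = 1 := by
    rw [Nat.dvd_one] at this
    exact orderOf_eq_one_iff.1 this
  rw [hn1, mul_one] at hln
  rw [← hln]; exact hl

theorem coprime_uniq [Finite G] (hsol : Group.IsSolvable G) {N : Subgroup G} [N.Normal]
    (hN : IsMinimalNormal G N)
    (hc : Nat.Coprime (Nat.card N) (Nat.card (G ⧸ N))) (M₁ M₂ : Subgroup G)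
    (h₁ : IsCompl M₁ N) (h₂ : IsCompl M₂ N) : Meets M₁ = Meets M₂ := by
  have hab := minNormal_abelian hsol hN
  exact meets_eq_of_core_eq hsol hN h₁ h₂
    (le_antisymm (coprime_core hab hc h₁ h₂) (coprime_core hab hc h₂ h₁))

theorem card_core_mul_le [Finite G] {N M : Subgroup G} [N.Normal]
    (hab : ∀ x ∈ N, ∀ y ∈ N, x * y = y * x) (h : IsCompl M N) :
    Nat.card (M ⊓ Subgroup.centralizer (N : Set G) : Subgroup G) * Nat.card N ≤
      Nat.card (Subgroup.centralizer (N : Set G)) := by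
  rw [← Nat.card_prod]
  refine Nat.card_le_card_of_injective
    (fun x : (M ⊓ Subgroup.centralizer (N : Set G) : Subgroup G) × N =>
      (⟨x.1 * x.2, Subgroup.mul_mem _ x.1.2.2 (le_cent hab x.2.2)⟩ :
        Subgroup.centralizer (N : Set G))) ?_
  rintro ⟨⟨a, ha⟩, ⟨b, hb⟩⟩ ⟨⟨c, hc⟩, ⟨d, hd⟩⟩ hEq
  have e : a * b = c * d := congrArg Subtype.val hEq
  have e1 : c⁻¹ * a = d * b⁻¹ := by
    rw [eq_mul_inv_iff_mul_eq, mul_assoc, e]; group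
  have e2 := compl_one h (M.mul_mem (M.inv_mem hc.1) ha.1)
    (by rw [e1]; exact N.mul_mem hd (N.inv_mem hb))
  have e3 : c = a := by rw [inv_mul_eq_one] at e2; exact e2
  subst e3
  have e4 : b = d := by simpa using e
  subst e4
  rfl

theorem meets_ncard_B [Finite G] {N M : Subgroup G} [N.Normal]
    (hab : ∀ x ∈ N, ∀ y ∈ N, x * y = y * x) (h : IsCompl M N) :
    ((Meets M).ncard : ℝ) ≤
      (1 - (1 - 1 / (Nat.card N : ℝ)) / (Subgroup.centralizer (N : Set G)).index) *
        Nat.card G := by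
  set C := Subgroup.centralizer (N : Set G) with hC
  have hKn := core_normal h
  rw [← hC] at hKn
  have hsub : Meets M ⊆ ((M ⊓ C : Subgroup G) : Set G) ∪ (C : Set G)ᶜ := by
    rintro g ⟨x, hx⟩
    by_cases hg : g ∈ C
    · left
      have hCn : C.Normal := by rw [hC]; infer_instance
      have h1 : x * g * x⁻¹ ∈ M ⊓ C := ⟨hx, hCn.conj_mem g hg x⟩
      have := hKn.conj_mem _ h1 x⁻¹
      have e : x⁻¹ * (x * g * x⁻¹) * x⁻¹⁻¹ = g := by group
      rw [e] at this
      exact this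
    · right; exact hg
  have h1 := (Set.ncard_le_ncard hsub (Set.toFinite _)).trans (Set.ncard_union_le _ _)
  have h2 : ((M ⊓ C : Subgroup G) : Set G).ncard = Nat.card (M ⊓ C : Subgroup G) := by
    rw [← Nat.card_coe_set_eq]; rfl
  have h3 : (C : Set G).ncard = Nat.card C := by
    rw [← Nat.card_coe_set_eq]; rfl
  have h4 := Set.ncard_add_ncard_compl (C : Set G)
  have h5 := card_core_mul_le hab h
  rw [← hC] at h5
  have h6 := C.card_mul_index
  rw [h2] at h1
  rw [h3] at h4
  have hq : (0 : ℝ) < Nat.card N := by exact_mod_cast Nat.card_pos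
  have hi : (0 : ℝ) < C.index := by
    exact_mod_cast Nat.pos_of_ne_zero Subgroup.index_ne_zero_of_finite
  have h1' : ((Meets M).ncard : ℝ) ≤ Nat.card (M ⊓ C : Subgroup G) + ((C : Set G)ᶜ).ncard := by
    exact_mod_cast h1
  have h4' : (Nat.card C : ℝ) + ((C : Set G)ᶜ).ncard = Nat.card G := by exact_mod_cast h4
  have h5' : (Nat.card (M ⊓ C : Subgroup G) : ℝ) * Nat.card N ≤ Nat.card C := by
    exact_mod_cast h5
  have h6' : (Nat.card C : ℝ) * C.index = Nat.card G := by exact_mod_cast h6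
  have e : (1 - (1 - 1 / (Nat.card N : ℝ)) / C.index) * Nat.card G =
      Nat.card G - Nat.card C + Nat.card C / Nat.card N := by
    rw [← h6']; field_simp; ring
  rw [e]
  have : (Nat.card (M ⊓ C : Subgroup G) : ℝ) ≤ Nat.card C / Nat.card N := by
    rw [le_div_iff₀ hq]; exact h5'
  linarith

theorem meets_ncard_A [Finite G] {N M : Subgroup G} [N.Normal] (hbot : N ≠ ⊥)
    (h : IsCompl M N) :
    (Meets M).ncard + Nat.card M ≤ Nat.card G := by
  classical
  have := Fintype.ofFinite G
  let _ : MulAction M N := MulAction.compHom N ((MulAut.conjNormal : G →* MulAut N).comp M.subtype)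
  have hsm : ∀ (m : M) (n : N), ((m • n : N) : G) = m * n * (m : G)⁻¹ := fun m n => rfl
  let S : M → Finset G := fun m => Finset.univ.image (fun n : N => (n : G) * m * (n : G)⁻¹)
  have hsub : Meets M ⊆ ((Finset.univ.biUnion S : Finset G) : Set G) := by
    rintro g ⟨x, hx⟩
    obtain ⟨m, hm, n, hn, hmn⟩ := compl_decomp h x
    simp only [S, Finset.coe_biUnion, Set.mem_iUnion, Finset.coe_image, Set.mem_image,
      Finset.coe_univ]
    refine ⟨⟨n * g * n⁻¹, ?_⟩, trivial, ⟨n⁻¹, N.inv_mem hn⟩, trivial, ?_⟩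
    · have := M.mul_mem (M.mul_mem (M.inv_mem hm) hx) hm
      convert this using 1
      rw [← hmn]; group
    · simp only; group
  have h1 : (Meets M).ncard ≤ ∑ m : M, (S m).card := by
    calc (Meets M).ncard ≤ ((Finset.univ.biUnion S : Finset G) : Set G).ncard :=
          Set.ncard_le_ncard hsub (Set.toFinite _)
      _ = (Finset.univ.biUnion S).card := Set.ncard_coe_finset _
      _ ≤ _ := Finset.card_biUnion_le
  have h2 : ∀ m : M, (S m).card + Fintype.card (MulAction.fixedBy N m) ≤ Fintype.card N + 1 := by
    intro m
    have hS : S m ⊆ insert (m : G) ((Finset.univ.filter (fun n : N => m • n ≠ n)).image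
        (fun n : N => (n : G) * m * (n : G)⁻¹)) := by
      intro g hg
      obtain ⟨n, -, rfl⟩ := Finset.mem_image.1 hg
      by_cases hn : m • n = n
      · apply Finset.mem_insert.2; left
        have := congrArg Subtype.val hn
        rw [hsm, mul_inv_eq_iff_eq_mul] at this
        rw [← this]; group
      · apply Finset.mem_insert.2; right
        exact Finset.mem_image.2 ⟨n, by simpa using hn, rfl⟩
    have h3 := (Finset.card_le_card hS).trans (Finset.card_insert_le _ _)
    have h4 := h3.trans (Nat.add_le_add_right Finset.card_image_le 1)
    have h5 : Fintype.card (MulAction.fixedBy N m) =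
        (Finset.univ.filter (fun n : N => m • n = n)).card := by
      rw [Fintype.card_subtype]
      congr
    have h6 := Finset.card_filter_add_card_filter_not (s := (Finset.univ : Finset N))
      (fun n => m • n = n)
    rw [Finset.card_univ] at h6
    rw [h5]
    have h7 : (Finset.univ.filter (fun n : N => m • n ≠ n)).card =
      (Finset.univ.filter (fun n : N => ¬ m • n = n)).card := rfl
    omega
  have h3 := MulAction.sum_card_fixedBy_eq_card_orbits_mul_card_group M N
  have h4 : 2 ≤ Fintype.card (Quotient (MulAction.orbitRel M N)) := by
    obtain ⟨n, hn1⟩ := N.ne_bot_iff_exists_ne_one.1 hbot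
    apply Fintype.one_lt_card_iff.2
    refine ⟨Quotient.mk _ 1, Quotient.mk _ n, ?_⟩
    intro hEq
    have := Quotient.exact hEq
    obtain ⟨m, hm⟩ := (MulAction.orbitRel_apply.1 this)
    have h5 := congrArg Subtype.val hm
    simp only [hsm] at h5
    apply hn1
    apply Subtype.ext
    have e : (n : G) = (m : G)⁻¹ * (m * n * (m : G)⁻¹) * m := by group
    rw [e, h5]; simp
  have h5 := Finset.sum_le_sum (fun m (_ : m ∈ (Finset.univ : Finset M)) => h2 m)
  rw [Finset.sum_add_distrib, h3, Finset.sum_const, Finset.card_univ, smul_eq_mul] at h5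
  have h6 := compl_card h
  rw [Nat.card_eq_fintype_card, Nat.card_eq_fintype_card] at h6
  rw [← h6, Nat.card_eq_fintype_card]
  nlinarith

theorem meets_ncard_A' [Finite G] {N M : Subgroup G} [N.Normal] (hbot : N ≠ ⊥)
    (h : IsCompl M N) :
    ((Meets M).ncard : ℝ) ≤ (1 - 1 / (Nat.card N : ℝ)) * Nat.card G := by
  have h1 : ((Meets M).ncard : ℝ) + Nat.card M ≤ Nat.card G := by
    exact_mod_cast meets_ncard_A hbot h
  have h2 : (Nat.card M : ℝ) * Nat.card N = Nat.card G := by exact_mod_cast compl_card h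
  have hq : (0 : ℝ) < Nat.card N := by exact_mod_cast Nat.card_pos
  have : (1 - 1 / (Nat.card N : ℝ)) * Nat.card G = Nat.card G - Nat.card M := by
    rw [← h2]; field_simp
  linarith

theorem stepA [Finite G] (hsol : Group.IsSolvable G) {N : Subgroup G} [N.Normal]
    (hN : IsMinimalNormal G N) (hs : Summable (failP (G ⧸ N))) :
    Summable (failP G) ∧ cheb G ≤ cheb (G ⧸ N) + Nat.card N := by
  have hab := minNormal_abelian hsol hN
  have hq : (0 : ℝ) < Nat.card N := by exact_mod_cast Nat.card_pos
  have := cheb_step hN hab (1 - 1 / (Nat.card N : ℝ)) (by have := one_div_pos.2 hq; linarith)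
    (fun M hM => meets_ncard_A' hN.2.1 hM) (huniq_lemma hsol hN) hs
  simpa using this

theorem one_lt_card_min [Finite G] {N : Subgroup G} (hN : IsMinimalNormal G N) :
    1 < Nat.card N := by
  have h1 : Nat.card N ≠ 1 := fun h => hN.2.1 (Subgroup.card_eq_one.1 h)
  have : 0 < Nat.card N := Nat.card_pos
  omega

theorem stepB [Finite G] (hsol : Group.IsSolvable G) {N : Subgroup G} [N.Normal]
    (hN : IsMinimalNormal G N) (hs : Summable (failP (G ⧸ N))) :
    cheb G ≤ cheb (G ⧸ N) + (Subgroup.centralizer (N : Set G)).index * Nat.card N /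
      (Nat.card N - 1) := by
  have hab := minNormal_abelian hsol hN
  have hq : (1 : ℝ) < Nat.card N := by exact_mod_cast one_lt_card_min hN
  have hi : (0 : ℝ) < (Subgroup.centralizer (N : Set G)).index := by
    exact_mod_cast Nat.pos_of_ne_zero Subgroup.index_ne_zero_of_finite
  have h1 : 0 < 1 - 1 / (Nat.card N : ℝ) := by
    rw [sub_pos, div_lt_one (by linarith)]; exact hq
  have := cheb_step hN hab _ (by have := div_pos h1 hi; linarith)
    (fun M hM => meets_ncard_B hab hM) (huniq_lemma hsol hN) hs
  convert this.2 using 2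
  have h2 : (Nat.card N : ℝ) - 1 ≠ 0 := by linarith
  rw [sub_sub_cancel, one_div_div]
  field_simp

theorem stepC [Finite G] (hsol : Group.IsSolvable G) {N : Subgroup G} [N.Normal]
    (hN : IsMinimalNormal G N) (hs : Summable (failP (G ⧸ N))) (hntop : N ≠ ⊤)
    (hc : Nat.Coprime (Nat.card N) (Nat.card (G ⧸ N))) :
    cheb G ≤ cheb (G ⧸ N) + (Nat.card N - 1) := by
  have hab := minNormal_abelian hsol hN
  have hq : (1 : ℝ) < Nat.card N := by exact_mod_cast one_lt_card_min hN
  have h1 : 0 < 1 - 1 / (Nat.card N : ℝ) := by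
    rw [sub_pos, div_lt_one (by linarith)]; exact hq
  have h0 : (0 : ℝ) < 1 / Nat.card N := one_div_pos.2 (by linarith)
  have := cheb_step_one hN hab hntop (1 - 1 / (Nat.card N : ℝ)) (by linarith)
    h1.le (fun M hM => meets_ncard_A' hN.2.1 hM) (coprime_uniq hsol hN hc) hs
  simpa using this

end GroupTheory2

section ElemAb

theorem card_span {V : Type} [AddCommGroup V] [Module (ZMod 2) V] [Finite V] (k : ℕ) :
    Nat.card {f : Fin k → V // Submodule.span (ZMod 2) (Set.range f) = ⊤} =
      Nat.card {g : Fin (Module.finrank (ZMod 2) V) → (Fin k → ZMod 2) //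
        LinearIndependent (ZMod 2) g} := by
  have : Fact (Nat.Prime 2) := ⟨Nat.prime_two⟩
  set s := Module.finrank (ZMod 2) V with hs
  let b : Module.Basis (Fin s) (ZMod 2) V := Module.finBasis (ZMod 2) V
  let e : V ≃ₗ[ZMod 2] (Fin s → ZMod 2) := b.equivFun
  let E : (Fin k → V) ≃ (Fin s → (Fin k → ZMod 2)) :=
    (Equiv.piCongrRight (fun _ : Fin k => e.toEquiv)).trans
      (Equiv.piComm (fun (_ : Fin k) (_ : Fin s) => ZMod 2))
  refine Nat.card_congr (Equiv.subtypeEquiv E ?_)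
  intro f
  have h1 : Submodule.span (ZMod 2) (Set.range f) = ⊤ ↔
      Submodule.span (ZMod 2) (Set.range (fun i => e (f i))) = ⊤ := by
    have : Set.range (fun i => e (f i)) = e.toLinearMap '' Set.range f := by
      rw [← Set.range_comp]; rfl
    rw [this, Submodule.span_image]
    constructor
    · intro h; rw [h, Submodule.map_top, LinearMap.range_eq_top]; exact e.surjective
    · intro h
      apply Submodule.map_injective_of_injective (f := e.toLinearMap) e.injective
      rw [h, Submodule.map_top, eq_comm, LinearMap.range_eq_top]; exact e.surjective
  rw [h1]
  let A : Matrix (Fin k) (Fin s) (ZMod 2) := Matrix.of (fun i j => e (f i) j)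
  have h2 : A.rank = Module.finrank (ZMod 2)
      (Submodule.span (ZMod 2) (Set.range (fun i => e (f i)))) := A.rank_eq_finrank_span_row
  have h3 : A.transpose.rank = Set.finrank (ZMod 2) (Set.range (E f)) :=
    A.transpose.rank_eq_finrank_span_row
  rw [Matrix.rank_transpose, h2] at h3
  rw [linearIndependent_iff_card_eq_finrank_span, ← h3, Fintype.card_fin]
  constructor
  · intro h; rw [h, finrank_top, Module.finrank_fin_fun]
  · intro h
    apply Submodule.eq_top_of_finrank_eq
    rw [← h, Module.finrank_fin_fun]

theorem card_LI (s k : ℕ) :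
    (Nat.card {g : Fin s → (Fin k → ZMod 2) // LinearIndependent (ZMod 2) g} : ℝ) =
      ∏ i ∈ Finset.range s, ((2 : ℝ) ^ k - 2 ^ i) := by
  have : Fact (Nat.Prime 2) := ⟨Nat.prime_two⟩
  by_cases hsk : s ≤ k
  · rw [card_linearIndependent (by rw [Module.finrank_fin_fun]; exact hsk),
      Module.finrank_fin_fun, ZMod.card, Finset.prod_range, Nat.cast_prod]
    refine Finset.prod_congr rfl fun i _ => ?_
    rw [Nat.cast_sub (Nat.pow_le_pow_right (by norm_num) (i.2.le.trans hsk))]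
    norm_num
  · rw [Finset.prod_eq_zero (i := k) (by simpa using hsk) (by simp)]
    have : IsEmpty {g : Fin s → (Fin k → ZMod 2) // LinearIndependent (ZMod 2) g} := by
      constructor
      rintro ⟨g, hg⟩
      have := hg.fintype_card_le_finrank
      rw [Module.finrank_fin_fun, Fintype.card_fin] at this
      exact hsk this
    rw [Nat.card_of_isEmpty, Nat.cast_zero]

theorem probInvGen_elem_comm {G : Type} [CommGroup G] [Finite G] (h : ∀ x : G, x ^ 2 = 1)
    {s : ℕ} (hs : Nat.card G = 2 ^ s) (k : ℕ) :
    probInvGen G k = ∏ i ∈ Finset.range s, (1 - 2 ^ i * (1 / 2 : ℝ) ^ k) := by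
  have : Fact (Nat.Prime 2) := ⟨Nat.prime_two⟩
  let _ : Module (ZMod 2) (Additive G) := AddCommGroup.zmodModule (fun x => h x.toMul)
  have hf : Module.finrank (ZMod 2) (Additive G) = s := by
    have h1 := Module.natCard_eq_pow_finrank (K := ZMod 2) (V := Additive G)
    have h2 : Nat.card (Additive G) = Nat.card G := rfl
    rw [h2, hs, Nat.card_zmod] at h1
    exact (Nat.pow_right_injective (le_refl 2) h1).symm
  have h1 : Nat.card {f : Fin k → G // InvGen G f} =
      Nat.card {f : Fin k → Additive G // Submodule.span (ZMod 2) (Set.range f) = ⊤} := by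
    refine Nat.card_congr (Equiv.subtypeEquiv
      (Equiv.piCongrRight (fun _ : Fin k => (Additive.ofMul : G ≃ Additive G))) ?_)
    intro f
    have e1 : InvGen G f ↔ Subgroup.closure (Set.range f) = ⊤ := by
      unfold InvGen
      simp
    rw [e1]
    constructor
    · intro hc
      rw [eq_top_iff]
      rintro x -
      have hx : x.toMul ∈ Subgroup.closure (Set.range f) := by rw [hc]; trivial
      refine Subgroup.closure_induction
        (p := fun y _ => Additive.ofMul y ∈ Submodule.span (ZMod 2)
          (Set.range (fun i : Fin k => Additive.ofMul (f i)))) ?_ ?_ ?_ ?_ hx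
      · rintro y ⟨i, rfl⟩
        exact Submodule.subset_span ⟨i, rfl⟩
      · exact Submodule.zero_mem _
      · intro y z _ _ hy hz
        exact Submodule.add_mem _ hy hz
      · intro y _ hy
        exact Submodule.neg_mem _ hy
    · intro hc
      have h3 : (AddSubgroup.toZModSubmodule 2 (Subgroup.toAddSubgroup
          (Subgroup.closure (Set.range f))) : Submodule (ZMod 2) (Additive G)) = ⊤ := by
        rw [eq_top_iff, ← hc, Submodule.span_le]
        rintro y ⟨i, rfl⟩
        change f i ∈ Subgroup.closure (Set.range f)
        exact Subgroup.subset_closure ⟨i, rfl⟩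
      rw [eq_top_iff]
      intro x _
      have : Additive.ofMul x ∈ (AddSubgroup.toZModSubmodule 2 (Subgroup.toAddSubgroup
          (Subgroup.closure (Set.range f))) : Submodule (ZMod 2) (Additive G)) := by
        rw [h3]; trivial
      exact this
  rw [probInvGen, h1, card_span, hf, card_LI, hs]
  push_cast
  rw [← pow_mul, mul_comm s k, pow_mul]
  have hprod : ((2 : ℝ) ^ k) ^ s = ∏ _i ∈ Finset.range s, (2 : ℝ) ^ k := by
    rw [Finset.prod_const, Finset.card_range]
  rw [hprod, ← Finset.prod_div_distrib]
  refine Finset.prod_congr rfl fun i _ => ?_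
  rw [sub_div, div_self (by positivity), one_div, inv_pow]; rfl

theorem probInvGen_elem {G : Type} [Group G] [Finite G] (h : ∀ x : G, x ^ 2 = 1)
    {s : ℕ} (hs : Nat.card G = 2 ^ s) (k : ℕ) :
    probInvGen G k = ∏ i ∈ Finset.range s, (1 - 2 ^ i * (1 / 2 : ℝ) ^ k) := by
  let _ : CommGroup G :=
    { (inferInstance : Group G) with
      mul_comm := fun a b => by
        have inv : ∀ x : G, x⁻¹ = x := fun x => by
          rw [inv_eq_iff_mul_eq_one, ← pow_two, h]
        rw [← inv (a * b), mul_inv_rev, inv, inv] }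
  exact probInvGen_elem_comm h hs k

theorem cheb_four {G : Type} [Group G] [Finite G] (h : ∀ x : G, x ^ 2 = 1)
    (hs : Nat.card G = 4) : cheb G = 10 / 3 := by
  have h1 := (hasSum_geometric_of_lt_one (r := (1 / 2 : ℝ)) (by norm_num) (by norm_num)).mul_left 3
  have h2 := (hasSum_geometric_of_lt_one (r := (1 / 4 : ℝ)) (by norm_num) (by norm_num)).mul_left 2
  have h3 := h1.sub h2
  unfold cheb
  have key : (fun k => 1 - probInvGen G k) = fun k => 3 * (1 / 2 : ℝ) ^ k - 2 * (1 / 4 : ℝ) ^ k := by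
    funext k
    rw [probInvGen_elem h (s := 2) hs]
    have : (1 / 4 : ℝ) ^ k = ((1 / 2) ^ k) ^ 2 := by rw [← pow_mul, mul_comm, pow_mul]; norm_num
    rw [this]
    simp only [Finset.prod_range_succ, Finset.prod_range_zero]
    ring
  rw [key, h3.tsum_eq]
  norm_num

theorem cheb_eight {G : Type} [Group G] [Finite G] (h : ∀ x : G, x ^ 2 = 1)
    (hs : Nat.card G = 8) : cheb G = 94 / 21 := by
  have h1 := (hasSum_geometric_of_lt_one (r := (1 / 2 : ℝ)) (by norm_num) (by norm_num)).mul_left 7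
  have h2 := (hasSum_geometric_of_lt_one (r := (1 / 4 : ℝ)) (by norm_num) (by norm_num)).mul_left 14
  have h4 := (hasSum_geometric_of_lt_one (r := (1 / 8 : ℝ)) (by norm_num) (by norm_num)).mul_left 8
  have h3 := (h1.sub h2).add h4
  unfold cheb
  have key : (fun k => 1 - probInvGen G k) = fun k => 7 * (1 / 2 : ℝ) ^ k - 14 * (1 / 4 : ℝ) ^ k + 8 * (1 / 8 : ℝ) ^ k := by
    funext k
    rw [probInvGen_elem h (s := 3) hs]
    have : (1 / 4 : ℝ) ^ k = ((1 / 2) ^ k) ^ 2 := by rw [← pow_mul, mul_comm, pow_mul]; norm_num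
    have t : (1 / 8 : ℝ) ^ k = ((1 / 2) ^ k) ^ 3 := by rw [← pow_mul, mul_comm, pow_mul]; norm_num
    rw [this, t]
    simp only [Finset.prod_range_succ, Finset.prod_range_zero]
    ring
  rw [key, h3.tsum_eq]
  norm_num

/-- If all minimal normal subgroups have order two and are complemented, the group is an
elementary abelian 2-group. -/
theorem elem_of_min {G : Type} [Group G] [Finite G]
    (H : ∀ N : Subgroup G, IsMinimalNormal G N → Nat.card N = 2 ∧ ∃ M, IsCompl M N) :
    ∀ x : G, x ^ 2 = 1 := by
  -- minimal normal subgroups below a nontrivial normal subgroup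
  have hex : ∀ L : Subgroup G, L.Normal → L ≠ ⊥ → ∃ N, IsMinimalNormal G N ∧ N ≤ L := by
    intro L hL hLb
    obtain ⟨N, hN⟩ := Set.Finite.exists_minimal
      (s := {N : Subgroup G | N.Normal ∧ N ≠ ⊥ ∧ N ≤ L}) (Set.toFinite _) ⟨L, hL, hLb, le_rfl⟩
    refine ⟨N, ⟨hN.1.1, hN.1.2.1, fun M h1 h2 h3 => le_antisymm h3 ?_⟩, hN.1.2.2⟩
    exact hN.2 ⟨h1, h2, h3.trans hN.1.2.2⟩ h3
  let T : Subgroup G :=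
    { carrier := {x | (∀ g : G, g * x = x * g) ∧ x ^ 2 = 1}
      mul_mem' := by
        rintro a b ⟨ha, ha2⟩ ⟨hb, hb2⟩
        refine ⟨fun g => ?_, ?_⟩
        · rw [← mul_assoc, ha, mul_assoc, hb, mul_assoc]
        · rw [Commute.mul_pow (hb a), ha2, hb2, one_mul]
      one_mem' := ⟨fun g => by simp, one_pow _⟩
      inv_mem' := by
        rintro a ⟨ha, ha2⟩
        refine ⟨fun g => ?_, by rw [inv_pow, ha2, inv_one]⟩
        exact (Commute.inv_right (ha g)) }
  have hT : T.Normal := by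
    constructor
    rintro n ⟨hn, hn2⟩ g
    rw [hn, mul_inv_cancel_right]; exact ⟨hn, hn2⟩
  have hNT : ∀ N, IsMinimalNormal G N → N ≤ T := by
    intro N hN x hx
    have hc := (H N hN).1
    have h2 : ∀ y ∈ N, y ^ 2 = 1 := by
      intro y hy
      have := pow_card_eq_one' (x := (⟨y, hy⟩ : N))
      rw [hc] at this
      exact congrArg Subtype.val this
    refine ⟨fun g => ?_, h2 x hx⟩
    by_cases hx1 : x = 1
    · simp [hx1]
    have hgx := hN.1.conj_mem x hx g
    have : Finite N := inferInstance
    obtain ⟨a, b, hab, huniv⟩ := Nat.card_eq_two_iff.1 hc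
    have key : ∀ y z : N, y ≠ 1 → z ≠ 1 → y = z := by
      have m : ∀ y : N, y = a ∨ y = b := fun y => by
        have : y ∈ ({a, b} : Set N) := by rw [huniv]; trivial
        simpa using this
      intro y z hy hz
      rcases m y with h | h <;> rcases m z with h' | h' <;> rcases m 1 with h'' | h'' <;> grind
    have h3 := key ⟨g * x * g⁻¹, hgx⟩ ⟨x, hx⟩ (by
      intro h
      have := congrArg Subtype.val h
      simp only [Subgroup.coe_one] at this
      rw [mul_inv_eq_one] at this
      exact hx1 (by simpa using this)) (fun h => hx1 (congrArg Subtype.val h))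
    have := congrArg Subtype.val h3
    exact mul_inv_eq_iff_eq_mul.1 this
  obtain ⟨M, hM⟩ := Set.Finite.exists_minimal
    (s := {M : Subgroup G | M ⊔ T = ⊤}) (Set.toFinite _) ⟨⊤, top_sup_eq _⟩
  have hMT : M ⊔ T = ⊤ := hM.1
  have hMn : M.Normal := by
    constructor
    intro n hn g
    have hg : g ∈ M ⊔ T := by rw [hMT]; trivial
    obtain ⟨m, hm, t, ht, rfl⟩ := Subgroup.mem_sup_of_normal_right.1 hg
    have : m * t * n * (m * t)⁻¹ = m * n * m⁻¹ := by
      have := ht.1 n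
      rw [mul_assoc m t n, ← this]; group
    rw [this]
    exact M.mul_mem (M.mul_mem hm hn) (M.inv_mem hm)
  have hinf : M ⊓ T = ⊥ := by
    by_contra hne
    obtain ⟨N, hN, hNle⟩ := hex (M ⊓ T) inferInstance hne
    obtain ⟨-, X, hX⟩ := H N hN
    have := hN.1
    have h1 : M ⊓ X ∈ {M : Subgroup G | M ⊔ T = ⊤} := by
      change M ⊓ X ⊔ T = ⊤
      rw [eq_top_iff, ← hMT]
      refine sup_le ?_ le_sup_right
      intro m hm
      obtain ⟨x, hx, n, hn, rfl⟩ := compl_decomp hX m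
      have hxM : x ∈ M := by
        have := M.mul_mem hm (M.inv_mem (hNle hn).1)
        simpa using this
      exact Subgroup.mul_mem _ (Subgroup.mem_sup_left ⟨hxM, hx⟩)
        (Subgroup.mem_sup_right (hNle hn).2)
    have h2 : M ≤ M ⊓ X := hM.2 h1 inf_le_left
    apply hN.2.1
    rw [eq_bot_iff, ← hX.inf_eq_bot]
    intro n hn
    exact ⟨(h2 (hNle hn).1).2, hn⟩
  have hMb : M = ⊥ := by
    by_contra hne
    obtain ⟨N, hN, hNle⟩ := hex M hMn hne
    apply hN.2.1
    rw [eq_bot_iff, ← hinf]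
    exact le_inf hNle (hNT N hN)
  rw [hMb, bot_sup_eq] at hMT
  intro x
  have : x ∈ T := by rw [hMT]; trivial
  exact this.2

theorem klein_of {G : Type} [Group G] [Finite G] (h : ∀ x : G, x ^ 2 = 1)
    (hs : Nat.card G = 4) : Nonempty (G ≃* Multiplicative (ZMod 2 × ZMod 2)) := by
  have : IsKleinFour G := by
    refine ⟨hs, ?_⟩
    have h1 : Monoid.exponent G ∣ 2 := Monoid.exponent_dvd_iff_forall_pow_eq_one.2 h
    rcases (Nat.dvd_prime Nat.prime_two).1 h1 with h2 | h2
    · rw [Monoid.exp_eq_one_iff] at h2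
      have := Nat.card_eq_one_iff_unique.2 ⟨h2, ⟨1⟩⟩
      omega
    · exact h2
  exact IsKleinFour.nonempty_mulEquiv

theorem cheb_klein {G : Type} [Group G] [Finite G]
    (h : Nonempty (G ≃* Multiplicative (ZMod 2 × ZMod 2))) :
    cheb G = 10 / 3 ∧ Nat.card G = 4 := by
  obtain ⟨e⟩ := h
  have hc : Nat.card G = 4 := by
    rw [Nat.card_congr e.toEquiv, IsKleinFour.card_four]
  refine ⟨cheb_four (fun x => e.injective ?_) hc, hc⟩
  rw [map_pow, map_one, pow_two, IsKleinFour.mul_self]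

end ElemAb

section Facts

variable {G : Type} [Group G]

theorem idx_dvd {N : Subgroup G} [N.Normal] (hab : ∀ x ∈ N, ∀ y ∈ N, x * y = y * x) :
    (Subgroup.centralizer (N : Set G)).index ∣ Nat.card (G ⧸ N) :=
  Subgroup.index_dvd_of_le (le_cent hab)

variable [Finite G]

theorem idx_dvd_prime {N : Subgroup G} [N.Normal] (hp : (Nat.card N).Prime) :
    (Subgroup.centralizer (N : Set G)).index ∣ Nat.card N - 1 := by
  have := Fact.mk hp
  have hcyc : IsCyclic N := isCyclic_of_prime_card (p := Nat.card N) rfl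
  have hk : (MulAut.conjNormal : G →* MulAut N).ker = Subgroup.centralizer (N : Set G) := by
    ext g
    rw [MonoidHom.mem_ker, Subgroup.mem_centralizer_iff]
    constructor
    · intro h n hn
      have h1 := congrArg (fun σ : MulAut N => ((σ ⟨n, hn⟩ : N) : G)) h
      simp only [MulAut.conjNormal_apply, MulAut.one_apply] at h1
      exact (mul_inv_eq_iff_eq_mul.1 h1).symm
    · intro h
      ext n
      rw [MulAut.conjNormal_apply, ← h n n.2]
      simp
  rw [← hk, Subgroup.index_ker, ← Nat.totient_prime hp, ← IsCyclic.card_mulAut N]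
  exact Subgroup.card_subgroup_dvd_card _

theorem central_prime {N : Subgroup G} (hN : IsMinimalNormal G N)
    (hc : ∀ x ∈ N, ∀ g : G, g * x = x * g) : (Nat.card N).Prime := by
  obtain ⟨p, hp, hdvd⟩ := Nat.exists_prime_and_dvd (one_lt_card_min hN).ne'
  have := Fact.mk hp
  obtain ⟨x, hx⟩ := exists_prime_orderOf_dvd_card' p hdvd
  have hle : Subgroup.zpowers (x : G) ≤ N := by
    rw [Subgroup.zpowers_le]; exact x.2
  have h1 : Subgroup.zpowers (x : G) = N := by
    apply hN.2.2 _ _ _ hle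
    · constructor
      intro n hn g
      rw [hc n (hle hn), mul_inv_cancel_right]; exact hn
    · rw [Ne, Subgroup.zpowers_eq_bot]
      intro h
      rw [show x = 1 from Subtype.ext h, orderOf_one] at hx
      exact hp.one_lt.ne hx
  rw [← h1, Nat.card_zpowers, Subgroup.orderOf_coe, hx]
  exact hp

theorem idx_one_prime {N : Subgroup G} (hN : IsMinimalNormal G N)
    (h : (Subgroup.centralizer (N : Set G)).index = 1) : (Nat.card N).Prime := by
  rw [Subgroup.index_eq_one] at h
  refine central_prime hN fun x hx g => ?_
  have : g ∈ Subgroup.centralizer (N : Set G) := by rw [h]; trivial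
  exact ((Subgroup.mem_centralizer_iff.1 this) x hx).symm

theorem pgroup_min_prime {N : Subgroup G} (hN : IsMinimalNormal G N) {p : ℕ} (hp : p.Prime)
    (hG : IsPGroup p G) : (Nat.card N).Prime := by
  have := Fact.mk hp
  have := hN.1
  let _ : MulAction G N := MulAction.compHom N (MulAut.conjNormal : G →* MulAut N)
  have hsm : ∀ (m : G) (n : N), ((m • n : N) : G) = m * n * (m : G)⁻¹ := fun m n => rfl
  have hpd : p ∣ Nat.card N := by
    obtain ⟨n, hn⟩ := IsPGroup.iff_card.1 (hG.to_subgroup N)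
    have := one_lt_card_min hN
    rw [hn] at this ⊢
    exact dvd_pow_self p (fun h => by rw [h] at this; simp at this)
  obtain ⟨b, hb, hb1⟩ := hG.exists_fixed_point_of_prime_dvd_card_of_fixed_point N hpd
    (a := 1) (fun g => Subtype.ext (by rw [hsm]; simp))
  have hbc : (b : G) ∈ N ⊓ Subgroup.center G := by
    refine ⟨b.2, Subgroup.mem_center_iff.2 fun g => ?_⟩
    have := congrArg Subtype.val (hb g)
    rw [hsm] at this
    exact mul_inv_eq_iff_eq_mul.1 this
  have h6 : N ⊓ Subgroup.center G = N := by
    apply hN.2.2 _ inferInstance _ inf_le_left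
    intro h
    rw [h, Subgroup.mem_bot] at hbc
    exact hb1 (Subtype.ext hbc.symm)
  refine central_prime hN fun x hx g => ?_
  rw [← h6] at hx
  exact Subgroup.mem_center_iff.1 hx.2 g

theorem card_min_prime_pow {N : Subgroup G} (hN : IsMinimalNormal G N)
    (hab : ∀ x ∈ N, ∀ y ∈ N, x * y = y * x) : ∃ p n : ℕ, p.Prime ∧ Nat.card N = p ^ n := by
  obtain ⟨p, hp, -, h⟩ := minNormal_exp hN hab
  have := Fact.mk hp
  have hNp : IsPGroup p N := isPGroup_of_exp (fun x => Subtype.ext (h x x.2))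
  obtain ⟨n, hn⟩ := IsPGroup.iff_card.1 hNp
  exact ⟨p, n, hp, hn⟩

theorem card_min_ne_six {N : Subgroup G} (hN : IsMinimalNormal G N)
    (hab : ∀ x ∈ N, ∀ y ∈ N, x * y = y * x) : Nat.card N ≠ 6 := by
  intro h6
  obtain ⟨p, n, hp, h⟩ := card_min_prime_pow hN hab
  have h2 : 2 ∣ p ^ n := by rw [← h, h6]; norm_num
  have h3 : 3 ∣ p ^ n := by rw [← h, h6]; norm_num
  have a := (Nat.prime_dvd_prime_iff_eq Nat.prime_two hp).1 (Nat.prime_two.dvd_of_dvd_pow h2)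
  have b := (Nat.prime_dvd_prime_iff_eq Nat.prime_three hp).1 (Nat.prime_three.dvd_of_dvd_pow h3)
  omega

theorem card_min_four {N : Subgroup G} [N.Normal] (hN : IsMinimalNormal G N)
    (h4 : Nat.card N = 4) (s : ℕ) : Nat.card (G ⧸ N) ≠ 2 ^ s := by
  intro h
  have := Fact.mk Nat.prime_two
  have hG : IsPGroup 2 G := by
    apply IsPGroup.of_card (n := s + 2)
    rw [Subgroup.card_eq_card_quotient_mul_card_subgroup N, h, h4, pow_add]
    norm_num
  have := pgroup_min_prime hN Nat.prime_two hG
  rw [h4] at this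
  norm_num at this

theorem cheb_trivial (h : Nat.card G = 1) : Summable (failP G) ∧ cheb G = 0 := by
  have : Subsingleton G := (Nat.card_eq_one_iff_unique.1 h).1
  have h0 : failP G = fun _ => 0 := by
    funext k
    rw [failP_eq]
    have : {f : Fin k → G | ¬ InvGen G f} = ∅ := by
      ext f
      simp only [Set.mem_ofPred_eq, Set.mem_empty_iff_false, iff_false, not_not]
      intro c
      exact Subsingleton.elim _ _
    rw [this]
    simp [pr]
  refine ⟨by rw [h0]; exact summable_zero, ?_⟩
  have : cheb G = ∑' k, failP G k := rfl
  rw [this, h0, tsum_zero]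

end Facts

section Reals

theorem bump {q κ : ℕ} {c w : ℝ} (r t : ℝ) (hr : 1 ≤ r) (hrq : r ^ 2 ≤ q) (ht : 0 ≤ t)
    (htk : t ^ 2 ≤ κ) (hc : c ≤ 5 / 3 * Real.sqrt κ) (hw : w < 5 / 3 * (r - 1) * t) :
    c + w < 5 / 3 * Real.sqrt ((q * κ : ℕ) : ℝ) := by
  rw [Nat.cast_mul, Real.sqrt_mul (Nat.cast_nonneg _)]
  have h1 : r ≤ Real.sqrt q := Real.le_sqrt_of_sq_le hrq
  have h2 : t ≤ Real.sqrt κ := Real.le_sqrt_of_sq_le htk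
  have h3 : (r - 1) * t ≤ (Real.sqrt q - 1) * Real.sqrt κ :=
    mul_le_mul (by linarith) h2 ht (by linarith)
  nlinarith

theorem quartic_ineq {s : ℝ} (hs8 : 2.828 ≤ s) :
    s ^ 4 < 25 / 9 * (s - 1) ^ 2 * (s ^ 2 - 1) := by
  obtain ⟨d, rfl⟩ : ∃ d, s = 2.828 + d := ⟨s - 2.828, by ring⟩
  have hd : 0 ≤ d := by linarith
  have : 0 ≤ d ^ 2 := by positivity
  have : 0 ≤ d ^ 3 := by positivity
  have : 0 ≤ d ^ 4 := by positivity
  nlinarith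

theorem bump_big {q κ h : ℕ} {c w : ℝ} (hq : 8 ≤ q) (hh : 1 ≤ h) (hk : h ≤ κ)
    (hc : c ≤ 5 / 3 * Real.sqrt κ) (hwA : w ≤ q) (hwB : w ≤ h * q / ((q : ℝ) - 1)) :
    c + w < 5 / 3 * Real.sqrt ((q * κ : ℕ) : ℝ) := by
  have hq' : (8 : ℝ) ≤ q := by exact_mod_cast hq
  have hk' : (h : ℝ) ≤ κ := by exact_mod_cast hk
  have hh' : (1 : ℝ) ≤ h := by exact_mod_cast hh
  set s := Real.sqrt q with hs
  have hs2 : s ^ 2 = q := Real.sq_sqrt (by linarith)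
  have hs8 : 2.828 ≤ s := Real.le_sqrt_of_sq_le (by norm_num; linarith)
  by_cases hcase : q ≤ h
  · have hhq : (q : ℝ) ≤ h := by exact_mod_cast hcase
    refine bump s s (by linarith) hs2.le (by linarith) (by linarith) hc ?_
    nlinarith
  · have hhq : (h : ℝ) ≤ q - 1 := by
      have : h + 1 ≤ q := by omega
      have : (h : ℝ) + 1 ≤ q := by exact_mod_cast this
      linarith
    set t := Real.sqrt h with ht
    have ht2 : t ^ 2 = h := Real.sq_sqrt (by linarith)
    have ht1 : 1 ≤ t := Real.le_sqrt_of_sq_le (by norm_num; linarith)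
    refine bump s t (by linarith) hs2.le (by linarith) (by linarith) hc (lt_of_le_of_lt hwB ?_)
    rw [div_lt_iff₀ (by linarith), ← ht2, ← hs2]
    have key : t * s ^ 2 < 5 / 3 * (s - 1) * (s ^ 2 - 1) := by
      have h1 : t ^ 2 ≤ s ^ 2 - 1 := by rw [ht2, hs2]; exact hhq
      have hs1 : 0 < s - 1 := by linarith
      have hs3 : 0 < s ^ 2 - 1 := by nlinarith
      apply lt_of_pow_lt_pow_left₀ 2 (by positivity)
      have h2 : (t * s ^ 2) ^ 2 ≤ (s ^ 2 - 1) * s ^ 4 := by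
        have : (t * s ^ 2) ^ 2 = t ^ 2 * s ^ 4 := by ring
        rw [this]
        exact mul_le_mul_of_nonneg_right h1 (by positivity)
      have h3 : s ^ 4 < 25 / 9 * (s - 1) ^ 2 * (s ^ 2 - 1) := quartic_ineq hs8
      calc (t * s ^ 2) ^ 2 ≤ (s ^ 2 - 1) * s ^ 4 := h2
        _ < (s ^ 2 - 1) * (25 / 9 * (s - 1) ^ 2 * (s ^ 2 - 1)) :=
          mul_lt_mul_of_pos_left h3 hs3
        _ = _ := by ring
    nlinarith

end Reals

section Main

/-- The inductive statement. -/
structure Good (G : Type) [Group G] : Prop where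
  summable : Summable (failP G)
  one : Nat.card G = 1 → cheb G ≤ 0
  two : Nat.card G = 2 → cheb G ≤ 2
  three : Nat.card G = 3 → cheb G ≤ 3 / 2
  six : Nat.card G = 6 → cheb G ≤ 4
  main : cheb G < 5 / 3 * Real.sqrt (Nat.card G) ∨
    Nonempty (G ≃* Multiplicative (ZMod 2 × ZMod 2))

theorem sqrt_four' : Real.sqrt ((4 : ℕ) : ℝ) = 2 := by
  rw [show ((4 : ℕ) : ℝ) = 2 ^ 2 by norm_num]
  exact Real.sqrt_sq (by norm_num)

theorem Good.le {G : Type} [Group G] [Finite G] (h : Good G) :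
    cheb G ≤ 5 / 3 * Real.sqrt (Nat.card G) := by
  rcases h.main with h | h
  · exact h.le
  · obtain ⟨h1, h2⟩ := cheb_klein h
    rw [h1, h2, sqrt_four']; norm_num

theorem sqrt_gt {x : ℝ} {n : ℕ} (hx : 0 ≤ x) (h : (3 / 5 * x) ^ 2 < n) :
    x < 5 / 3 * Real.sqrt n := by
  have : 3 / 5 * x < Real.sqrt n := Real.lt_sqrt_of_sq_lt h
  linarith

theorem good_frattini {G : Type} [Group G] [Finite G] {N : Subgroup G} [N.Normal]
    (hN : IsMinimalNormal G N) (hab : ∀ x ∈ N, ∀ y ∈ N, x * y = y * x)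
    (hno : ¬ ∃ M, IsCompl M N) (hQ : Good (G ⧸ N)) : Good G := by
  have hf : failP G = failP (G ⧸ N) := funext fun k => failP_frattini hN hab hno k
  have hch : cheb G = cheb (G ⧸ N) := by
    change ∑' k, failP G k = ∑' k, failP (G ⧸ N) k
    rw [hf]
  have hcard : Nat.card G = Nat.card N * Nat.card (G ⧸ N) := by
    rw [Subgroup.card_eq_card_quotient_mul_card_subgroup N, mul_comm]
  have hq := one_lt_card_min hN
  have hk : 0 < Nat.card (G ⧸ N) := Nat.card_pos
  have hle := hQ.le
  have hlt : cheb G < 5 / 3 * Real.sqrt (Nat.card G) := by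
    rw [hch]
    refine lt_of_le_of_lt hle ?_
    have : Real.sqrt (Nat.card (G ⧸ N)) < Real.sqrt (Nat.card G) := by
      apply Real.sqrt_lt_sqrt (Nat.cast_nonneg _)
      rw [hcard]
      exact_mod_cast (Nat.lt_mul_iff_one_lt_left hk).2 hq
    linarith
  refine ⟨by rw [hf]; exact hQ.summable, ?_, ?_, ?_, ?_, Or.inl hlt⟩
  · intro h
    rw [hcard] at h
    have := Nat.eq_one_of_mul_eq_one_right h
    omega
  · intro h
    have : Nat.card (G ⧸ N) = 1 := by
      rw [hcard] at h
      nlinarith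
    rw [hch]; linarith [hQ.one this]
  · intro h
    have : Nat.card (G ⧸ N) = 1 := by
      rw [hcard] at h
      nlinarith
    rw [hch]; linarith [hQ.one this]
  · intro h
    have h3 : Nat.card (G ⧸ N) ≤ 3 := by
      rw [hcard] at h
      nlinarith
    rw [hch]
    interval_cases hc : Nat.card (G ⧸ N)
    · linarith [hQ.one hc]
    · linarith [hQ.two hc]
    · linarith [hQ.three hc]

theorem good_of_lt {G : Type} [Group G] (hs : Summable (failP G))
    (hlt : cheb G < 5 / 3 * Real.sqrt (Nat.card G)) (h1 : Nat.card G ≠ 1) (h2 : Nat.card G ≠ 2)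
    (h3 : Nat.card G ≠ 3) (h6 : Nat.card G ≠ 6) : Good G :=
  ⟨hs, fun h => absurd h h1, fun h => absurd h h2, fun h => absurd h h3, fun h => absurd h h6,
    Or.inl hlt⟩

theorem good_step {G : Type} [Group G] [Finite G] (hsol : Group.IsSolvable G) {N : Subgroup G}
    [N.Normal] (hN : IsMinimalNormal G N) (hq2 : Nat.card N ≠ 2) (hQ : Good (G ⧸ N)) :
    Good G := by
  have hab := minNormal_abelian hsol hN
  have hcard : Nat.card G = Nat.card N * Nat.card (G ⧸ N) := by
    rw [Subgroup.card_eq_card_quotient_mul_card_subgroup N, mul_comm]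
  have hq := one_lt_card_min hN
  have hk : 0 < Nat.card (G ⧸ N) := Nat.card_pos
  have hle := hQ.le
  obtain ⟨hsum, hA⟩ := stepA hsol hN hQ.summable
  have hB := stepB hsol hN hQ.summable
  have hC := stepC hsol hN hQ.summable
  have hdvd := idx_dvd hab
  have hpr := idx_dvd_prime (N := N)
  have h6 := card_min_ne_six hN hab
  have h4 := card_min_four hN
  have hntop : Nat.card (G ⧸ N) ≠ 1 → N ≠ ⊤ := by
    rintro h rfl
    exact h (Subgroup.index_top)
  have hpos : 0 < (Subgroup.centralizer (N : Set G)).index :=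
    Nat.pos_of_ne_zero Subgroup.index_ne_zero_of_finite
  generalize (Subgroup.centralizer (N : Set G)).index = h at *
  have hhk : h ≤ Nat.card (G ⧸ N) := Nat.le_of_dvd hk hdvd
  by_cases hq8 : 8 ≤ Nat.card N
  · apply good_of_lt hsum
    · rw [hcard]
      have := bump_big (w := cheb G - cheb (G ⧸ N)) hq8 hpos hhk hle (by linarith) (by linarith)
      linarith
    all_goals nlinarith
  generalize hκ : Nat.card (G ⧸ N) = κ at *
  have hq7 : Nat.card N ≤ 7 := by omega
  have hcases : Nat.card N = 3 ∨ Nat.card N = 4 ∨ Nat.card N = 5 ∨ Nat.card N = 7 := by omega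
  rcases hcases with e | e | e | e <;> rw [e] at hcard hA hB hC hpr
  · -- order three
    have hd2 : h ∣ 2 := hpr Nat.prime_three
    rcases (Nat.dvd_prime Nat.prime_two).1 hd2 with rfl | rfl
    · have hB' : cheb G ≤ cheb (G ⧸ N) + 3 / 2 := by
        refine hB.trans_eq ?_
        norm_num
      by_cases hκ1 : κ = 1
      · subst hκ1
        have h0 := hQ.one hκ
        have hG3 : Nat.card G = 3 := by omega
        refine ⟨hsum, by omega, by omega, fun _ => by linarith, by omega, Or.inl ?_⟩
        refine lt_of_le_of_lt (by linarith : cheb G ≤ 3 / 2) ?_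
        rw [hG3]
        exact sqrt_gt (by norm_num) (by norm_num)
      · have hκ2 : (2 : ℝ) ≤ κ := by exact_mod_cast (by omega : 2 ≤ κ)
        refine ⟨hsum, by omega, by omega, by omega, ?_, Or.inl ?_⟩
        · intro hG
          have := hQ.two (by omega)
          linarith
        · rw [hcard]
          refine lt_of_le_of_lt hB' (bump 1.73 1.41 (by norm_num) (by norm_num) (by norm_num)
            (by norm_num; linarith) hle (by norm_num))
    · obtain ⟨j, rfl⟩ := hdvd
      have hj : j = 1 ∨ j = 2 ∨ j = 3 ∨ 4 ≤ j := by omega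
      rcases hj with rfl | rfl | rfl | hj
      · have := hC (hntop (by norm_num)) (by norm_num)
        have h2 := hQ.two hκ
        have hG : Nat.card G = 6 := by omega
        have h4 : cheb G ≤ 4 := by norm_num at this; linarith
        refine ⟨hsum, by omega, by omega, by omega, fun _ => h4, Or.inl ?_⟩
        refine lt_of_le_of_lt h4 ?_
        rw [hG]
        exact sqrt_gt (by norm_num) (by norm_num)
      · have := hC (hntop (by norm_num)) (by norm_num)
        apply good_of_lt hsum _ (by omega) (by omega) (by omega) (by omega)
        rw [hcard]
        exact lt_of_le_of_lt this (bump 1.73 2 (by norm_num) (by norm_num) (by norm_num)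
            (by norm_num) hle (by norm_num))
      · have h6 := hQ.six hκ
        apply good_of_lt hsum _ (by omega) (by omega) (by omega) (by omega)
        have h7 : cheb G ≤ 7 := by norm_num at hA; linarith
        refine lt_of_le_of_lt h7 ?_
        rw [hcard]
        exact sqrt_gt (by norm_num) (by norm_num)
      · apply good_of_lt hsum _ (by omega) (by omega) (by omega) (by omega)
        have hκ8 : (8 : ℝ) ≤ ((2 * j : ℕ) : ℝ) := by exact_mod_cast (by omega : 8 ≤ 2 * j)
        rw [hcard]
        exact lt_of_le_of_lt hA (bump 1.73 2.82 (by norm_num) (by norm_num) (by norm_num)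
            (by norm_num at hκ8 ⊢; linarith) hle (by norm_num))
  · -- order four
    have n1 := h4 e 0
    have n2 := h4 e 1
    have n4 := h4 e 2
    norm_num at n1 n2 n4
    apply good_of_lt hsum _ (by omega) (by omega) (by omega) (by omega)
    rw [hcard]
    have hj : κ = 3 ∨ κ = 5 ∨ 6 ≤ κ := by omega
    rcases hj with rfl | rfl | hj
    · have := hC (hntop (by norm_num)) (by norm_num)
      have h3 := hQ.three hκ
      have h7 : cheb G ≤ 9 / 2 := by norm_num at this; linarith
      refine lt_of_le_of_lt h7 ?_
      exact sqrt_gt (by norm_num) (by norm_num)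
    · have := hC (hntop (by norm_num)) (by norm_num)
      exact lt_of_le_of_lt this (bump 2 2.2 (by norm_num) (by norm_num) (by norm_num)
            (by norm_num) hle (by norm_num))
    · have hκ6 : (6 : ℝ) ≤ κ := by exact_mod_cast hj
      exact lt_of_le_of_lt hA (bump 2 2.44 (by norm_num) (by norm_num) (by norm_num)
            (by norm_num; linarith) hle (by norm_num))
  · -- order five
    apply good_of_lt hsum _ (by omega) (by omega) (by omega) (by omega)
    rw [hcard]
    have hd4 : h ∣ 4 := hpr Nat.prime_five
    have hh4 : h ≤ 4 := Nat.le_of_dvd (by norm_num) hd4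
    have hj : h = 1 ∨ h = 2 ∨ h = 4 := by interval_cases h <;> omega
    rcases hj with rfl | rfl | rfl
    · have hκ1 : (1 : ℝ) ≤ κ := by exact_mod_cast hhk
      exact lt_of_le_of_lt hB (bump 2.23 1 (by norm_num) (by norm_num) (by norm_num)
            (by norm_num; linarith) hle (by norm_num))
    · have hκ1 : (2 : ℝ) ≤ κ := by exact_mod_cast hhk
      exact lt_of_le_of_lt hB (bump 2.23 1.41 (by norm_num) (by norm_num) (by norm_num)
            (by norm_num; linarith) hle (by norm_num))
    · obtain ⟨j, rfl⟩ := hdvd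
      have hj : j = 1 ∨ 2 ≤ j := by omega
      rcases hj with rfl | hj
      · have := hC (hntop (by norm_num)) (by norm_num)
        exact lt_of_le_of_lt this (bump 2.23 2 (by norm_num) (by norm_num) (by norm_num)
            (by norm_num) hle (by norm_num))
      · have hκ8 : (8 : ℝ) ≤ ((4 * j : ℕ) : ℝ) := by exact_mod_cast (by omega : 8 ≤ 4 * j)
        exact lt_of_le_of_lt hA (bump 2.23 2.82 (by norm_num) (by norm_num) (by norm_num)
            (by norm_num at hκ8 ⊢; linarith) hle (by norm_num))
  · -- order seven
    apply good_of_lt hsum _ (by omega) (by omega) (by omega) (by omega)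
    rw [hcard]
    have hd6 : h ∣ 6 := hpr (by norm_num)
    have hh6 : h ≤ 6 := Nat.le_of_dvd (by norm_num) hd6
    have hj : h = 1 ∨ h = 2 ∨ h = 3 ∨ h = 6 := by interval_cases h <;> omega
    rcases hj with rfl | rfl | rfl | rfl
    · have hκ1 : (1 : ℝ) ≤ κ := by exact_mod_cast hhk
      exact lt_of_le_of_lt hB (bump 2.6 1 (by norm_num) (by norm_num) (by norm_num)
            (by norm_num; linarith) hle (by norm_num))
    · have hκ1 : (2 : ℝ) ≤ κ := by exact_mod_cast hhk
      exact lt_of_le_of_lt hB (bump 2.6 1.41 (by norm_num) (by norm_num) (by norm_num)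
            (by norm_num; linarith) hle (by norm_num))
    · have hκ1 : (3 : ℝ) ≤ κ := by exact_mod_cast hhk
      exact lt_of_le_of_lt hB (bump 2.6 1.7 (by norm_num) (by norm_num) (by norm_num)
            (by norm_num; linarith) hle (by norm_num))
    · obtain ⟨j, rfl⟩ := hdvd
      have hj : j = 1 ∨ 2 ≤ j := by omega
      rcases hj with rfl | hj
      · have := hC (hntop (by norm_num)) (by norm_num)
        exact lt_of_le_of_lt this (bump 2.6 2.4 (by norm_num) (by norm_num) (by norm_num)
            (by norm_num) hle (by norm_num))
      · have hκ8 : (12 : ℝ) ≤ ((6 * j : ℕ) : ℝ) := by exact_mod_cast (by omega : 12 ≤ 6 * j)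
        exact lt_of_le_of_lt hA (bump 2.6 3 (by norm_num) (by norm_num) (by norm_num)
            (by norm_num at hκ8 ⊢; linarith) hle (by norm_num))

theorem good_elem {G : Type} [Group G] [Finite G] (hsol : Group.IsSolvable G) {N : Subgroup G}
    [N.Normal] (hN : IsMinimalNormal G N) (hq2 : Nat.card N = 2) (hx : ∀ x : G, x ^ 2 = 1)
    (hQ : Good (G ⧸ N)) : Good G := by
  have hcard : Nat.card G = 2 * Nat.card (G ⧸ N) := by
    rw [Subgroup.card_eq_card_quotient_mul_card_subgroup N, mul_comm, hq2]
  have hle := hQ.le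
  obtain ⟨hsum, hA⟩ := stepA hsol hN hQ.summable
  rw [hq2] at hA
  have := Fact.mk Nat.prime_two
  obtain ⟨s, hs⟩ := IsPGroup.iff_card.1 (isPGroup_of_exp hx)
  have hcases : s = 0 ∨ s = 1 ∨ s = 2 ∨ s = 3 ∨ s = 4 ∨ 5 ≤ s := by omega
  rcases hcases with rfl | rfl | rfl | rfl | rfl | h5
  · omega
  · have h2 : cheb G ≤ 2 := by
      have := hQ.one (by omega)
      norm_num at hA; linarith
    refine ⟨hsum, by omega, fun _ => h2, by omega, by omega, Or.inl ?_⟩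
    refine lt_of_le_of_lt h2 ?_
    rw [hs]
    exact sqrt_gt (by norm_num) (by norm_num)
  · exact ⟨hsum, by omega, by omega, by omega, by omega, Or.inr (klein_of hx hs)⟩
  · apply good_of_lt hsum _ (by omega) (by omega) (by omega) (by omega)
    rw [cheb_eight hx hs, hs]
    exact sqrt_gt (by norm_num) (by norm_num)
  · apply good_of_lt hsum _ (by omega) (by omega) (by omega) (by omega)
    have hx' : ∀ x : G ⧸ N, x ^ 2 = 1 := by
      intro x
      obtain ⟨y, rfl⟩ := QuotientGroup.mk_surjective x
      rw [← QuotientGroup.mk_pow, hx]; rfl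
    rw [cheb_eight hx' (by omega)] at hA
    refine lt_of_le_of_lt hA ?_
    rw [hs]
    exact sqrt_gt (by norm_num) (by norm_num)
  · have h32 : 2 ^ 5 ≤ 2 ^ s := Nat.pow_le_pow_right (by norm_num) h5
    norm_num at h32
    apply good_of_lt hsum _ (by omega) (by omega) (by omega) (by omega)
    have hκ : (16 : ℝ) ≤ Nat.card (G ⧸ N) := by
      exact_mod_cast (by omega : 16 ≤ Nat.card (G ⧸ N))
    rw [hcard]
    exact lt_of_le_of_lt hA (bump 1.4 4 (by norm_num) (by norm_num) (by norm_num)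
            (by norm_num; linarith) hle (by norm_num))

theorem good_all (n : ℕ) : ∀ (G : Type) [Group G] [Finite G], Group.IsSolvable G →
    Nat.card G = n → Good G := by
  induction n using Nat.strong_induction_on with
  | _ n ih =>
    intro G _ _ hsol hn
    by_cases h1 : Nat.card G = 1
    · obtain ⟨a, b⟩ := cheb_trivial h1
      refine ⟨a, fun _ => b.le, by omega, by omega, by omega, Or.inl ?_⟩
      rw [b, h1]
      exact sqrt_gt (by norm_num) (by norm_num)
    have hnt : Nontrivial G := by
      rw [← Finite.one_lt_card_iff_nontrivial]
      have : 0 < Nat.card G := Nat.card_pos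
      omega
    have hQ : ∀ N : Subgroup G, ∀ hN : IsMinimalNormal G N, ∀ _ : N.Normal, Good (G ⧸ N) := by
      intro N hN hNn
      refine ih (Nat.card (G ⧸ N)) ?_ (G ⧸ N) inferInstance rfl
      have h1 := Subgroup.card_eq_card_quotient_mul_card_subgroup N
      have h2 := one_lt_card_min hN
      have h3 : 0 < Nat.card (G ⧸ N) := Nat.card_pos
      rw [← hn, h1]
      nlinarith
    by_cases hfr : ∃ N : Subgroup G, IsMinimalNormal G N ∧ ¬ ∃ M, IsCompl M N
    · obtain ⟨N, hN, hno⟩ := hfr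
      have := hN.1
      exact good_frattini hN (minNormal_abelian hsol hN) hno (hQ N hN this)
    by_cases hst : ∃ N : Subgroup G, IsMinimalNormal G N ∧ Nat.card N ≠ 2
    · obtain ⟨N, hN, hne⟩ := hst
      have := hN.1
      exact good_step hsol hN hne (hQ N hN this)
    push Not at hfr hst
    obtain ⟨N, hN⟩ := exists_minNormal G
    have := hN.1
    exact good_elem hsol hN (hst N hN)
      (elem_of_min fun N hN => ⟨hst N hN, hfr N hN⟩) (hQ N hN this)

theorem final (G : Type) [Group G] [Finite G] (hsol : IsSolvable G) :
    cheb G ≤ 5 / 3 * Real.sqrt (Nat.card G) ∧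
      (cheb G = 5 / 3 * Real.sqrt (Nat.card G) ↔
        Nonempty (G ≃* Multiplicative (ZMod 2 × ZMod 2))) := by
  have hg := good_all _ G hsol rfl
  refine ⟨hg.le, ?_, ?_⟩
  · intro h
    rcases hg.main with h' | h'
    · exact absurd h h'.ne
    · exact h'
  · intro h
    obtain ⟨h1, h2⟩ := cheb_klein h
    rw [h1, h2, sqrt_four']; norm_num

end Main

/-- **Theorem 1(ii)**: if `G` is a finite soluble group then `C(G) ≤ (5/3)·√|G|`,
with equality if and only if `G ≅ C₂ × C₂`. -/
theorem chebotarev_soluble_bound (G : Type) [Group G] [Finite G] (hsol : IsSolvable G) :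
    cheb G ≤ 5 / 3 * Real.sqrt (Nat.card G) ∧
      (cheb G = 5 / 3 * Real.sqrt (Nat.card G) ↔
        Nonempty (G ≃* Multiplicative (ZMod 2 × ZMod 2))) := by
  exact final G hsol

end ChebotarevPaper
end
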